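/- arXiv:math/0605740 — 2 statements merged into one kernel-verified Lean document; each statement's English description precedes it below -/
import Mathlib

section
/- (Corollary 1(a), linearly underdetermined setting.) Consider the uniform Gaussian ensemble, and a sequence of problems in which n/p(n) → γ for some γ ∈ (0,1) and s(n)/p(n) → α for some α ∈ (0,1), with s, p − s → ∞. Then for any positive non-increasing sequence λ_n > 0, the probability (over X and W) that property R(X, β*, W, λ_n) holds converges to 0 as n → ∞. -/
/-!
Write `b = sgn β*`, `S` for the support of `β*`, and suppose that the Lasso recovers the signs. By
the Karush-Kuhn-Tucker conditions (`exists_dualCert`), the residual divided by `n λ` is a vector `r`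
with `⟨X_i, r⟩ = b_i` for `i ∈ S`, with `|⟨X_j, r⟩| ≤ 1` for `j ∉ S`, and with
`n λ r - W` in the span of the columns in `S`. Two facts make such an `r` unlikely.

* The vector `r` is not small (`DualCert.norm_lower`): `⟨X b, r⟩ = ∑_{i ∈ S} b_i² = s`, so
  `‖r‖² ≥ s² / ‖X b‖²`. As `E ‖X b‖² = n s`, Markov's inequality gives `‖r‖² ≥ s / (M n)` except with
  probability `1 / M` (`measure_sum_sq_ge_le`). The ratio `s / n` tends to `α / γ`, so this lower
  bound is at least some constant `c > 0`.
* The vector `r` is determined by `X_S` and `W`, hence independent of the other columns. Given `r`,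
  the `p - s` variables `⟨X_j, r⟩` are i.i.d. `N(0, ‖r‖²)`, so they all lie in `[-1, 1]` with
  probability at most `q ^ (p - s)`, where `q = P(|N(0, 1)| ≤ 1 / √c) < 1` (`measure_split_le`).

Sign recovery therefore has probability at most `1 / M + q ^ (p - s)`, and `M` is
arbitrary. The set of designs admitting a certificate is measurable because it is the projection of
a closed set along a σ-compact space, which allows Fubini's theorem without any measurable choice
of `r`.
-/

open MeasureTheory ProbabilityTheory Matrix Filter

/-- The sign function, `sgn t ∈ {-1, 0, 1}`. -/
noncomputable def sgn (t : ℝ) : ℝ := if 0 < t then 1 else if t < 0 then -1 else 0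

/-- The Lasso objective `(1/(2n)) ‖Y - Xβ‖₂² + λ ‖β‖₁`. -/
noncomputable def lassoObj {n p : ℕ} (X : Matrix (Fin n) (Fin p) ℝ)
    (Y : Fin n → ℝ) (lam : ℝ) (β : Fin p → ℝ) : ℝ :=
  (1 / (2 * (n : ℝ))) * ∑ k, (Y k - ∑ j, X k j * β j) ^ 2 + lam * ∑ j, |β j|

/-- Property `R(X, β*, w, λ)`: some optimal solution of the Lasso with observation
`Y = X β* + w` has the same (componentwise) sign pattern as `β*`. -/
noncomputable def PropR {n p : ℕ} (X : Matrix (Fin n) (Fin p) ℝ) (βs : Fin p → ℝ)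
    (w : Fin n → ℝ) (lam : ℝ) : Prop :=
  ∃ βh : Fin p → ℝ,
    (∀ β : Fin p → ℝ,
      lassoObj X (fun k => (∑ j, X k j * βs j) + w k) lam βh ≤
        lassoObj X (fun k => (∑ j, X k j * βs j) + w k) lam β) ∧
    ∀ i, sgn (βh i) = sgn (βs i)

/-- The standard Gaussian measure on `ι → ℝ`: i.i.d. standard normal coordinates. -/
noncomputable def stdGaussian (ι : Type*) [Fintype ι] : Measure (ι → ℝ) :=
  Measure.pi (fun _ : ι => gaussianReal 0 1)

/-! ### Optimality conditions -/

/-- First-order condition extracted from a quadratic expansion: divide by `t` and let `t` tend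
to `0` from the right. -/
lemma le_of_quad {d a lam t₀ : ℝ} (ht₀ : 0 < t₀)
    (h : ∀ t, 0 < t → t < t₀ → 0 ≤ -(t * d) + a * t ^ 2 + lam * t) : d ≤ lam := by
  by_contra! hlt
  have hA : 0 < |a| + 1 := by positivity
  set t := min (t₀ / 2) ((d - lam) / (2 * (|a| + 1))) with ht
  have htpos : 0 < t := lt_min (by linarith) (div_pos (by linarith) (by positivity))
  have h1 := h t htpos (lt_of_le_of_lt (min_le_left _ _) (by linarith))
  have h2 : t * (2 * (|a| + 1)) ≤ d - lam := by
    rw [← le_div_iff₀ (by positivity)]; exact min_le_right _ _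
  have h3 : a * t ≤ (|a| + 1) * t := mul_le_mul_of_nonneg_right (by linarith [le_abs_self a]) htpos.le
  have h4 : 0 ≤ t * (-d + a * t + lam) := by nlinarith
  have h5 := nonneg_of_mul_nonneg_right h4 htpos
  nlinarith

lemma sgn_sq_of_ne {t : ℝ} (ht : t ≠ 0) : sgn t ^ 2 = 1 := by
  unfold sgn
  rcases lt_or_gt_of_ne ht with h | h
  · simp [h, h.not_gt]
  · simp [h]

lemma sgn_eq_zero_iff {t : ℝ} : sgn t = 0 ↔ t = 0 := by
  refine ⟨fun h => by_contra fun ht => ?_, fun h => by simp [sgn, h]⟩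
  have := sgn_sq_of_ne ht
  simp [h] at this

/-- One-coordinate optimality for the Lasso: if `t = 0` minimizes
`-t g + a t² + lam (|b + t| - |b|)`, then `g` is `lam` times a subgradient of `|·|` at `b`. -/
lemma subgradient_of_minimizer {b g a lam : ℝ} (hlam : 0 < lam)
    (h : ∀ t : ℝ, 0 ≤ -(t * g) + a * t ^ 2 + lam * (|b + t| - |b|)) :
    |g| ≤ lam ∧ (b ≠ 0 → g = lam * sgn b) := by
  have hab : ∀ t : ℝ, 0 ≤ -(t * g) + a * t ^ 2 + lam * |t| := fun t => by
    have h1 := h t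
    have h2 : |b + t| - |b| ≤ |t| := by linarith [abs_add_le b t]
    nlinarith
  have hu : g ≤ lam := le_of_quad (a := a) one_pos fun t ht _ => by
    simpa [abs_of_pos ht] using hab t
  have hl : -g ≤ lam := le_of_quad (a := a) one_pos fun t ht _ => by
    simpa [abs_of_pos ht] using hab (-t)
  refine ⟨abs_le.2 ⟨by linarith, hu⟩, fun hb => ?_⟩
  rcases lt_or_gt_of_ne hb with hb | hb
  · have : g ≤ -lam := le_of_quad (a := a) (t₀ := -b) (by linarith) fun t ht htb => by
      have := h t
      rw [abs_of_neg hb, abs_of_neg (by linarith)] at this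
      linarith
    simp only [sgn, hb, hb.not_gt, if_true, if_false]
    linarith
  · have : -g ≤ -lam := le_of_quad (a := a) hb fun t ht htb => by
      have := h (-t)
      rw [abs_of_pos hb, abs_of_pos (by linarith)] at this
      linarith
    simp only [sgn, hb, if_true]
    linarith

/-- A dual certificate for the Lasso with sign vector `b` on `S`: `r` is the residual divided by
`κ = n λ`, and `δ = β* - β̂`, which is supported on `S`. The conditions are the stationarity
conditions on `S`, dual feasibility off `S`, and the definition of the residual. -/
def DualCert {n p : ℕ} (X : Fin n → Fin p → ℝ) (S : Finset (Fin p)) (b : Fin p → ℝ)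
    (w : Fin n → ℝ) (κ : ℝ) (r : Fin n → ℝ) (δ : Fin p → ℝ) : Prop :=
  (∀ i ∈ S, ∑ k, X k i * r k = b i) ∧ (∀ j ∉ S, |∑ k, X k j * r k| ≤ 1) ∧
    (∀ k, κ * r k = w k + ∑ j, X k j * δ j) ∧ ∀ j ∉ S, δ j = 0

/-- The Karush-Kuhn-Tucker conditions: sign recovery produces a dual certificate. -/
lemma exists_dualCert {n p : ℕ} (hn : 0 < n) (X : Fin n → Fin p → ℝ) (βs : Fin p → ℝ)
    (w : Fin n → ℝ) {lam : ℝ} (hlam : 0 < lam) (S : Finset (Fin p))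
    (hS : ∀ i, i ∈ S ↔ βs i ≠ 0) (h : PropR (Matrix.of X) βs w lam) :
    ∃ r δ, DualCert X S (fun i => sgn (βs i)) w (n * lam) r δ := by
  obtain ⟨βh, hopt, hsgn⟩ := h
  have hn' : (0 : ℝ) < n := by exact_mod_cast hn
  set u : Fin n → ℝ := fun k => (∑ j, X k j * βs j) + w k - ∑ j, X k j * βh j with hu
  -- Compare the objective at `βh` with its value after moving coordinate `i` by `t`.
  have key : ∀ i, |(∑ k, X k i * u k) / n| ≤ lam ∧
      (βh i ≠ 0 → (∑ k, X k i * u k) / n = lam * sgn (βh i)) := fun i => by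
    refine subgradient_of_minimizer (a := (∑ k, X k i ^ 2) / (2 * n)) hlam fun t => ?_
    have h1 := hopt (Function.update βh i (βh i + t))
    have h2 : ∀ k, ∑ j, X k j * Function.update βh i (βh i + t) j
        = ∑ j, X k j * βh j + X k i * t := fun k => by
      rw [← Finset.add_sum_erase _ _ (Finset.mem_univ i),
        ← Finset.add_sum_erase _ (fun j => X k j * βh j) (Finset.mem_univ i)]
      rw [Finset.sum_congr rfl (g := fun j => X k j * βh j) fun j hj => by
        rw [Function.update_of_ne (Finset.ne_of_mem_erase hj)]]
      simp; ring
    have h3 : ∑ j, |Function.update βh i (βh i + t) j| = ∑ j, |βh j| + (|βh i + t| - |βh i|) := by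
      rw [← Finset.add_sum_erase _ _ (Finset.mem_univ i),
        ← Finset.add_sum_erase _ (fun j => |βh j|) (Finset.mem_univ i)]
      rw [Finset.sum_congr rfl (g := fun j => |βh j|) fun j hj => by
        rw [Function.update_of_ne (Finset.ne_of_mem_erase hj)]]
      simp; ring
    have h4 : ∑ k, ((∑ j, X k j * βs j) + w k - (∑ j, X k j * βh j + X k i * t)) ^ 2
        = ∑ k, (u k) ^ 2 - 2 * t * (∑ k, X k i * u k) + t ^ 2 * ∑ k, X k i ^ 2 := by
      rw [Finset.mul_sum, Finset.mul_sum, ← Finset.sum_sub_distrib, ← Finset.sum_add_distrib]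
      refine Finset.sum_congr rfl fun k _ => ?_
      simp only [hu]; ring
    simp only [lassoObj, Matrix.of_apply, h2, h3, h4] at h1
    have h5 : -(t * ((∑ k, X k i * u k) / n)) + (∑ k, X k i ^ 2) / (2 * n) * t ^ 2
        = 1 / (2 * (n : ℝ)) * (∑ k, (u k) ^ 2 - 2 * t * (∑ k, X k i * u k)
          + t ^ 2 * ∑ k, X k i ^ 2) - 1 / (2 * (n : ℝ)) * ∑ k, (u k) ^ 2 := by
      field_simp; ring
    rw [h5]
    have h6 : ∑ k, (u k) ^ 2
      = ∑ k, ((∑ j, X k j * βs j) + w k - ∑ j, X k j * βh j) ^ 2 := rfl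
    rw [← h6] at h1
    linarith
  have hsum : ∀ i, ∑ k, X k i * (u k / (n * lam)) = (∑ k, X k i * u k) / n / lam := fun i => by
    rw [div_div, Finset.sum_div]
    exact Finset.sum_congr rfl fun k _ => by ring
  refine ⟨fun k => u k / (n * lam), fun j => βs j - βh j, fun i hi => ?_, fun j _ => ?_,
    fun k => ?_, fun j hj => ?_⟩
  · have : βh i ≠ 0 := by
      rw [Ne, ← sgn_eq_zero_iff, hsgn i, sgn_eq_zero_iff]; exact (hS i).1 hi
    rw [hsum, (key i).2 this, hsgn i]
    field_simp
  · rw [hsum, abs_div, abs_of_pos hlam]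
    exact div_le_one_of_le₀ (key j).1 hlam.le
  · simp only [hu, mul_sub, Finset.sum_sub_distrib]
    field_simp
    ring
  · have h0 : βs j = 0 := by by_contra h; exact hj ((hS j).2 h)
    have : βh j = 0 := by rw [← sgn_eq_zero_iff, hsgn j, h0]; simp [sgn]
    simp [h0, this]

/-- Since `X_Sᵀ r = b` on `S`, one has `⟨X b, r⟩ = ‖b‖² = |S|`; Cauchy-Schwarz then bounds
`‖r‖` from below. -/
lemma DualCert.norm_lower {n p : ℕ} {X : Fin n → Fin p → ℝ} {S : Finset (Fin p)} {b : Fin p → ℝ}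
    {w : Fin n → ℝ} {κ : ℝ} {r : Fin n → ℝ} {δ : Fin p → ℝ} (h : DualCert X S b w κ r δ)
    (hb : ∀ i ∈ S, b i ^ 2 = 1) (hb0 : ∀ i ∉ S, b i = 0) :
    (S.card : ℝ) ^ 2 ≤ (∑ k, (∑ j, b j * X k j) ^ 2) * ∑ k, r k ^ 2 := by
  have h1 : (S.card : ℝ) = ∑ k, (∑ j, b j * X k j) * r k := by
    simp_rw [Finset.sum_mul]
    rw [Finset.sum_comm, ← Finset.sum_subset (Finset.subset_univ S)]
    · rw [Finset.sum_congr rfl (g := fun _ => (1 : ℝ)) fun i hi => ?_]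
      · simp
      · simp_rw [mul_assoc]
        rw [← Finset.mul_sum, h.1 i hi, ← sq, hb i hi]
    · intro i _ hi
      simp [hb0 i hi]
  rw [h1]
  exact Finset.sum_mul_sq_le_sq_mul_sq _ _ _

/-! ### Gaussian estimates -/

/-- A linear form `∑ aᵢ xᵢ` in i.i.d. standard normal variables has law `N(0, ‖a‖²)`. -/
lemma map_sum_mul_pi_gaussian {ι : Type*} [Fintype ι] (a : ι → ℝ) :
    (Measure.pi fun _ : ι => gaussianReal 0 1).map (fun x => ∑ i, a i * x i)
      = gaussianReal 0 (∑ i, a i ^ 2).toNNReal := by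
  apply Measure.ext_of_charFun
  ext t
  have hm : Measurable (fun x : ι → ℝ => ∑ i, a i * x i) := by fun_prop
  rw [charFun_apply_real, integral_map hm.aemeasurable (by fun_prop)]
  have : ∀ x : ι → ℝ, Complex.exp (t * ((∑ i, a i * x i : ℝ) : ℂ) * Complex.I)
      = ∏ i, Complex.exp (((t * a i : ℝ) : ℂ) * (x i : ℂ) * Complex.I) := fun x => by
    rw [← Complex.exp_sum]
    congr 1
    push_cast
    rw [Finset.mul_sum, Finset.sum_mul]
    exact Finset.sum_congr rfl fun i _ => by ring
  simp_rw [this]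
  rw [integral_fintype_prod_eq_prod
    (f := fun i (y : ℝ) => Complex.exp (((t * a i : ℝ) : ℂ) * (y : ℂ) * Complex.I))]
  simp_rw [← charFun_apply_real, charFun_gaussianReal]
  rw [← Complex.exp_sum]
  congr 1
  rw [Real.coe_toNNReal _ (Finset.sum_nonneg fun i _ => sq_nonneg _)]
  push_cast
  simp only [mul_zero, zero_mul, zero_sub, one_mul, Finset.sum_neg_distrib, Finset.sum_mul,
    Finset.sum_div]
  congr 1
  exact Finset.sum_congr rfl fun i _ => by ring

lemma lintegral_sq_gaussian (v : NNReal) :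
    ∫⁻ x, ENNReal.ofReal (x ^ 2) ∂gaussianReal 0 v = v := by
  rw [← ofReal_integral_eq_lintegral_ofReal]
  · have h := variance_fun_id_gaussianReal (μ := 0) (v := v)
    rw [variance_of_integral_eq_zero (by fun_prop) (by simp)] at h
    simp [h]
  · exact (memLp_id_gaussianReal (μ := 0) (v := v) 2).integrable_sq
  · exact ae_of_all _ fun x => sq_nonneg x

lemma gaussian_Icc_lt_one (K : ℝ) : gaussianReal 0 1 (Set.Icc (-K) K) < 1 := by
  rw [← not_le]
  intro h
  have h1 : gaussianReal 0 1 (Set.Icc (-K) K)ᶜ = 0 := by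
    rw [prob_compl_eq_zero_iff measurableSet_Icc]
    exact le_antisymm prob_le_one h
  have h2 := gaussianReal_absolutelyContinuous' 0 (one_ne_zero : (1 : NNReal) ≠ 0) h1
  have h3 : (volume : Measure ℝ) (Set.Ioi K) = 0 :=
    by
    refine measure_mono_null ?_ h2
    intro x hx hx'
    exact absurd hx'.2 (not_le.2 hx)
  simp at h3

lemma pi_gaussian_slab_le {ι : Type*} [Fintype ι] {c : ℝ} (hc : 0 < c) (r : ι → ℝ)
    (hr : c ≤ ∑ i, r i ^ 2) :
    (Measure.pi fun _ : ι => gaussianReal 0 1) {x | |∑ i, x i * r i| ≤ 1}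
      ≤ gaussianReal 0 1 (Set.Icc (-(1 / √c)) (1 / √c)) := by
  set v := ∑ i, r i ^ 2
  have hv : 0 < v := hc.trans_le hr
  have h1 : {x : ι → ℝ | |∑ i, x i * r i| ≤ 1} = (fun x => ∑ i, r i * x i) ⁻¹' Set.Icc (-1) 1 := by
    ext x; simp [abs_le, mul_comm]
  have h2 : gaussianReal 0 v.toNNReal = (gaussianReal 0 1).map (fun x => √v * x) := by
    rw [gaussianReal_map_const_mul]
    congr 1
    · simp
    · ext; simp [hv.le]
  rw [h1, ← Measure.map_apply (by fun_prop) measurableSet_Icc, map_sum_mul_pi_gaussian, h2,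
    Measure.map_apply (by fun_prop) measurableSet_Icc]
  refine measure_mono fun x hx => ?_
  have hsc : 0 < √c := Real.sqrt_pos.2 hc
  have hcv : √c ≤ √v := Real.sqrt_le_sqrt hr
  have h3 : |√v * x| ≤ 1 := abs_le.2 hx
  rw [abs_mul, abs_of_nonneg (Real.sqrt_nonneg v)] at h3
  refine abs_le.1 ?_
  rw [le_div_iff₀ hsc]
  nlinarith [abs_nonneg x]

/-! ### Conditioning on the support columns -/

/-- The projection of a closed set along a σ-compact factor is an `F_σ` set, hence measurable. -/
lemma measurableSet_exists_of_isClosed {Z V : Type*} [TopologicalSpace Z] [MeasurableSpace Z]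
    [OpensMeasurableSpace Z] [TopologicalSpace V] [SigmaCompactSpace V] {C : Set (Z × V)}
    (hC : IsClosed C) : MeasurableSet {z | ∃ v, (z, v) ∈ C} := by
  have : {z | ∃ v, (z, v) ∈ C}
      = ⋃ m : ℕ, Prod.fst '' ((Prod.map id (Subtype.val : compactCovering V m → V)) ⁻¹' C) := by
    ext z
    simp only [Set.mem_ofPred_eq, Set.mem_iUnion]
    constructor
    · rintro ⟨v, hv⟩
      obtain ⟨m, hm⟩ := exists_mem_compactCovering v
      exact ⟨m, (z, ⟨v, hm⟩), hv, rfl⟩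
    · rintro ⟨m, ⟨z', v⟩, hv, rfl⟩
      exact ⟨v, hv⟩
  rw [this]
  refine MeasurableSet.iUnion fun m => IsClosed.measurableSet ?_
  have : CompactSpace (compactCovering V m) := isCompact_iff_compactSpace.1 (isCompact_compactCovering V m)
  exact isClosedMap_fst_of_compactSpace _ (hC.preimage (by fun_prop))

/-- Transposing an array of i.i.d. variables preserves its law; this turns i.i.d. rows into
i.i.d. columns. -/
lemma map_swap_pi {ι κ E : Type*} [Fintype ι] [Fintype κ] [MeasurableSpace E] (ν : Measure E)
    [IsProbabilityMeasure ν] :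
    MeasurePreserving (fun (x : ι → κ → E) j k => x k j)
      (Measure.pi fun _ : ι => Measure.pi fun _ : κ => ν)
      (Measure.pi fun _ : κ => Measure.pi fun _ : ι => ν) := by
  have hm : Measurable (fun (x : ι → κ → E) j k => x k j) := by fun_prop
  refine ⟨hm, Eq.symm ?_⟩
  refine Measure.pi_eq_generateFrom
    (C := fun _ => Set.pi Set.univ '' Set.pi Set.univ fun _ : ι => {s : Set E | MeasurableSet s})
    (fun _ => generateFrom_pi) (fun _ => isPiSystem_pi)
    (fun _ => ⟨fun _ => Set.univ, fun _ => ⟨fun _ => Set.univ, by simp, by simp⟩, by simp, by simp [Set.iUnion_const]⟩)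
    fun s hs => ?_
  choose f hf hfs using hs
  have hs' : s = fun j => Set.pi Set.univ (f j) := (funext hfs).symm
  subst hs'
  have hfm : ∀ j k, MeasurableSet (f j k) := fun j k => hf j k trivial
  rw [Measure.map_apply hm
    (MeasurableSet.univ_pi fun j => MeasurableSet.univ_pi fun k => hfm j k)]
  have : (fun (x : ι → κ → E) j k => x k j) ⁻¹' (Set.pi Set.univ fun j => Set.pi Set.univ (f j))
      = Set.pi Set.univ fun k => Set.pi Set.univ fun j => f j k := by
    ext x; simp only [Set.mem_preimage, Set.mem_pi, Set.mem_univ, true_implies]; exact forall_comm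
  rw [this]
  simp only [Measure.pi_pi]
  exact Finset.prod_comm

/-- Given the support columns `A = z.1` and the noise `w`, the vector `r` is unique: the
difference of two candidates lies both in the range of `A` and in the kernel of its transpose.
The columns `z.2` are independent of `A`, so each of them satisfies `|⟨z.2 j, r⟩| ≤ 1`
independently, with probability at most that of `|N(0, 1)| ≤ 1 / √c`. -/
lemma measure_split_le {n : ℕ} {I J : Type*} [Fintype I] [Fintype J] (b : I → ℝ)
    (w : Fin n → ℝ) {κ c : ℝ} (hκ : κ ≠ 0) (hc : 0 < c) (μ : Measure (I → Fin n → ℝ))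
    [IsProbabilityMeasure μ] :
    (μ.prod (Measure.pi fun _ : J => Measure.pi fun _ : Fin n => gaussianReal 0 1))
      {z | ∃ v : (Fin n → ℝ) × (I → ℝ), (∀ i, ∑ k, z.1 i k * v.1 k = b i) ∧
        (∀ j, |∑ k, z.2 j k * v.1 k| ≤ 1) ∧ (∀ k, κ * v.1 k = w k + ∑ i, z.1 i k * v.2 i) ∧
        c ≤ ∑ k, v.1 k ^ 2}
      ≤ gaussianReal 0 1 (Set.Icc (-(1 / √c)) (1 / √c)) ^ Fintype.card J := by
  -- Fubini: bound the section of `G` over each fixed `A`, empty or contained in a product of slabs.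
  set G : Set ((I → Fin n → ℝ) × (J → Fin n → ℝ)) := {z | ∃ v : (Fin n → ℝ) × (I → ℝ), _}
  have hG : MeasurableSet G := by
    refine measurableSet_exists_of_isClosed (C := {y : ((I → Fin n → ℝ) × (J → Fin n → ℝ)) ×
      ((Fin n → ℝ) × (I → ℝ)) | (∀ i, ∑ k, y.1.1 i k * y.2.1 k = b i) ∧
        (∀ j, |∑ k, y.1.2 j k * y.2.1 k| ≤ 1) ∧
        (∀ k, κ * y.2.1 k = w k + ∑ i, y.1.1 i k * y.2.2 i) ∧ c ≤ ∑ k, y.2.1 k ^ 2}) ?_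
    simp only [Set.ofPred_and, Set.ofPred_forall]
    refine IsClosed.inter (isClosed_iInter fun i => isClosed_eq (by fun_prop) (by fun_prop))
      (IsClosed.inter (isClosed_iInter fun j => isClosed_le (by fun_prop) (by fun_prop))
      (IsClosed.inter (isClosed_iInter fun k => isClosed_eq (by fun_prop) (by fun_prop))
      (isClosed_le (by fun_prop) (by fun_prop))))
  rw [Measure.prod_apply hG]
  refine (lintegral_mono (g := fun _ => gaussianReal 0 1 (Set.Icc (-(1 / √c)) (1 / √c)) ^ Fintype.card J)
    fun A => ?_).trans_eq (by simp)
  by_cases hA : ∃ B, (A, B) ∈ G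
  · obtain ⟨B, ⟨r, β⟩, h1, -, h3, h4⟩ := hA
    have hsub : Prod.mk A ⁻¹' G ⊆ Set.pi Set.univ fun _ : J => {x | |∑ k, x k * r k| ≤ 1} := by
      rintro B' ⟨⟨r', β'⟩, h1', h2', h3', -⟩ j -
      dsimp only at h1 h3 h1' h2' h3'
      have hd : κ * ∑ k, (r k - r' k) ^ 2 = 0 := by
        calc κ * ∑ k, (r k - r' k) ^ 2
            = ∑ k, (r k - r' k) * ∑ i, A i k * (β i - β' i) := by
              rw [Finset.mul_sum]
              refine Finset.sum_congr rfl fun k _ => ?_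
              simp only [mul_sub, Finset.sum_sub_distrib]
              linear_combination (r k - r' k) * (h3 k - h3' k)
          _ = ∑ i, (β i - β' i) * (∑ k, A i k * r k - ∑ k, A i k * r' k) := by
              simp_rw [← Finset.sum_sub_distrib, Finset.mul_sum]
              rw [Finset.sum_comm]
              exact Finset.sum_congr rfl fun i _ => Finset.sum_congr rfl fun k _ => by ring
          _ = 0 := by simp [h1, h1']
      have hr : r = r' := by
        have h0 := (mul_eq_zero.1 hd).resolve_left hκ
        rw [Finset.sum_eq_zero_iff_of_nonneg fun _ _ => sq_nonneg _] at h0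
        ext k
        have := pow_eq_zero_iff (two_ne_zero) |>.1 (h0 k (Finset.mem_univ k))
        linarith
      rw [hr]
      exact h2' j
    refine (measure_mono hsub).trans ?_
    rw [Measure.pi_pi, Finset.prod_const, Finset.card_univ]
    exact pow_le_pow_left₀ zero_le (pi_gaussian_slab_le hc r h4) _
  · have : Prod.mk A ⁻¹' G = ∅ := by
      ext B; simpa using fun h => hA ⟨B, h⟩
    simp [this]

/-- A dual certificate with `‖r‖² ≥ c` exists with probability exponentially small in the number
of columns outside `S`. -/
lemma measure_dualCert_le {n p : ℕ} (S : Finset (Fin p)) (b : Fin p → ℝ) {κ c : ℝ} (hκ : κ ≠ 0)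
    (hc : 0 < c) (ν : Measure (Fin n → ℝ)) [IsProbabilityMeasure ν] :
    ((Measure.pi fun _ : Fin n => Measure.pi fun _ : Fin p => gaussianReal 0 1).prod ν)
      {z | ∃ v : (Fin n → ℝ) × (Fin p → ℝ), DualCert z.1 S b z.2 κ v.1 v.2 ∧ c ≤ ∑ k, v.1 k ^ 2}
      ≤ gaussianReal 0 1 (Set.Icc (-(1 / √c)) (1 / √c)) ^ (p - S.card) := by
  set F : Set ((Fin n → Fin p → ℝ) × (Fin n → ℝ)) := {z | ∃ v : (Fin n → ℝ) × (Fin p → ℝ), _}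
  have hF : MeasurableSet F := by
    refine measurableSet_exists_of_isClosed (C := {y : ((Fin n → Fin p → ℝ) × (Fin n → ℝ)) ×
      ((Fin n → ℝ) × (Fin p → ℝ)) | DualCert y.1.1 S b y.1.2 κ y.2.1 y.2.2 ∧
        c ≤ ∑ k, y.2.1 k ^ 2}) ?_
    simp only [DualCert, Set.ofPred_and, Set.ofPred_forall]
    refine IsClosed.inter (IsClosed.inter ?_ (IsClosed.inter ?_ (IsClosed.inter ?_ ?_)))
      (isClosed_le (by fun_prop) (by fun_prop))
    · exact isClosed_iInter fun i => isClosed_iInter fun _ => isClosed_eq (by fun_prop) (by fun_prop)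
    · exact isClosed_iInter fun i => isClosed_iInter fun _ => isClosed_le (by fun_prop) (by fun_prop)
    · exact isClosed_iInter fun i => isClosed_eq (by fun_prop) (by fun_prop)
    · exact isClosed_iInter fun i => isClosed_iInter fun _ => isClosed_eq (by fun_prop) (by fun_prop)
  rw [Measure.prod_apply_symm hF]
  refine (lintegral_mono
    (g := fun _ => gaussianReal 0 1 (Set.Icc (-(1 / √c)) (1 / √c)) ^ (p - S.card))
    fun w => ?_).trans_eq (by simp)
  -- Transpose to columns, then split the columns into those in `S` and those outside `S`.
  have hsplit := (measurePreserving_piEquivPiSubtypeProd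
    (fun _ : Fin p => Measure.pi fun _ : Fin n => gaussianReal 0 1) (fun j => j ∈ S)).comp
    (map_swap_pi (ι := Fin n) (κ := Fin p) (gaussianReal 0 1))
  have hcard : Fintype.card {j // j ∉ S} = p - S.card := by
    rw [Fintype.card_subtype_compl]; simp
  rw [← hcard]
  refine (measure_mono ?_).trans ((hsplit.measure_preimage_le _).trans
    (measure_split_le (fun i : {i // i ∈ S} => b i) w hκ hc _))
  rintro X ⟨⟨r, δ⟩, ⟨h1, h2, h3, h4⟩, h5⟩
  refine ⟨(r, fun i => δ i), fun i => h1 i i.2, fun j => h2 j j.2, fun k => ?_, h5⟩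
  refine (h3 k).trans ?_
  congr 1
  change _ = ∑ i : {i // i ∈ S}, X k i * δ i
  rw [Finset.sum_coe_sort S (fun i => X k i * δ i)]
  exact (Finset.sum_subset (Finset.subset_univ S) fun j _ hj =>
    mul_eq_zero_of_right _ (h4 j hj)).symm

/-! ### Union bound -/

/-- Markov's inequality for `‖X b‖²`, whose expectation is `n ‖b‖²`. -/
lemma measure_sum_sq_ge_le {n p s M : ℕ} (hn : 0 < n) (hs : 0 < s) (hM : 0 < M) (b : Fin p → ℝ)
    (hb : ∑ j, b j ^ 2 = s) :
    (Measure.pi fun _ : Fin n => Measure.pi fun _ : Fin p => gaussianReal 0 1)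
      {X | (M * (s * n) : ℝ) ≤ ∑ k, (∑ j, b j * X k j) ^ 2} ≤ (M : ENNReal)⁻¹ := by
  set μ := Measure.pi fun _ : Fin n => Measure.pi fun _ : Fin p => gaussianReal 0 1
  have hrow : ∀ k : Fin n, ∫⁻ X, ENNReal.ofReal ((∑ j, b j * X k j) ^ 2) ∂μ = s := fun k => by
    have hk : MeasurePreserving (fun X : Fin n → Fin p → ℝ => X k) μ
      (Measure.pi fun _ : Fin p => gaussianReal 0 1) := measurePreserving_eval _ k
    have hm : Measurable (fun x : Fin p → ℝ => ∑ j, b j * x j) := by fun_prop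
    rw [hk.lintegral_comp (f := fun x => ENNReal.ofReal ((∑ j, b j * x j) ^ 2)) (by fun_prop),
      ← lintegral_map (f := fun y : ℝ => ENNReal.ofReal (y ^ 2)) (by fun_prop) hm,
      map_sum_mul_pi_gaussian, lintegral_sq_gaussian, hb]
    simp
  have hint : ∫⁻ X, ENNReal.ofReal (∑ k, (∑ j, b j * X k j) ^ 2) ∂μ = s * n := by
    simp_rw [ENNReal.ofReal_sum_of_nonneg fun i _ => sq_nonneg _]
    rw [lintegral_finsetSum _ fun k _ => by fun_prop]
    simp [hrow, mul_comm]
  have hset : {X : Fin n → Fin p → ℝ | (M * (s * n) : ℝ) ≤ ∑ k, (∑ j, b j * X k j) ^ 2}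
      = {X | (M * (s * n) : ENNReal) ≤ ENNReal.ofReal (∑ k, (∑ j, b j * X k j) ^ 2)} := by
    ext X
    rw [Set.mem_ofPred_eq, Set.mem_ofPred_eq,
      ← ENNReal.ofReal_le_ofReal_iff (Finset.sum_nonneg fun _ _ => sq_nonneg _)]
    congr! 1
    norm_cast
  rw [hset]
  have hsn : (s * n : ENNReal) ≠ 0 := by exact_mod_cast (Nat.mul_pos hs hn).ne'
  have hsn' : (s * n : ENNReal) ≠ ⊤ := by finiteness
  have hM' : (M : ENNReal) ≠ 0 := by exact_mod_cast hM.ne'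
  have hmk := mul_meas_ge_le_lintegral (μ := μ)
    (f := fun X => ENNReal.ofReal (∑ k, (∑ j, b j * X k j) ^ 2)) (by fun_prop) (M * (s * n))
  rw [hint, mul_comm (M : ENNReal), mul_assoc] at hmk
  conv_rhs at hmk => rw [← mul_one (s * n : ENNReal)]
  rw [ENNReal.mul_le_mul_iff_right hsn hsn', mul_comm (s * n : ENNReal)] at hmk
  rwa [ENNReal.le_inv_iff_mul_le, mul_comm]

/-- Non-asymptotic form of the converse: a union bound over the event that `‖X b‖²` is large and
the event that a dual certificate with `‖r‖² ≥ c` exists. -/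
lemma measure_propR_le {n p M : ℕ} (hn : 0 < n) (hM : 0 < M) {βs : Fin p → ℝ}
    {S : Finset (Fin p)} (hS : ∀ i, i ∈ S ↔ βs i ≠ 0) (hS0 : 0 < S.card)
    {c : ℝ} (hc : 0 < c) (hcS : c * (M * n) ≤ S.card) {lam : ℝ} (hlam : 0 < lam)
    (ν : Measure (Fin n → ℝ)) [IsProbabilityMeasure ν] :
    ((Measure.pi fun _ : Fin n => Measure.pi fun _ : Fin p => gaussianReal 0 1).prod ν)
      {z | PropR (Matrix.of z.1) βs z.2 lam}
      ≤ (M : ENNReal)⁻¹ + gaussianReal 0 1 (Set.Icc (-(1 / √c)) (1 / √c)) ^ (p - S.card) := by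
  have hn' : (0 : ℝ) < n := by exact_mod_cast hn
  have hM' : (0 : ℝ) < M := by exact_mod_cast hM
  have hs' : (0 : ℝ) < S.card := by exact_mod_cast hS0
  set b : Fin p → ℝ := fun i => sgn (βs i) with hbdef
  have hb1 : ∀ i ∈ S, b i ^ 2 = 1 := fun i hi => sgn_sq_of_ne ((hS i).1 hi)
  have hb0 : ∀ i ∉ S, b i = 0 := fun i hi => sgn_eq_zero_iff.2 (by simpa [hS] using hi)
  have hb : ∑ j, b j ^ 2 = S.card := by
    rw [← Finset.sum_subset (Finset.subset_univ S) fun i _ hi => by simp [hb0 i hi],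
      Finset.sum_congr rfl hb1]
    simp
  set T := {X : Fin n → Fin p → ℝ | (M * (S.card * n) : ℝ) ≤ ∑ k, (∑ j, b j * X k j) ^ 2}
  have hsub : {z : (Fin n → Fin p → ℝ) × (Fin n → ℝ) | PropR (Matrix.of z.1) βs z.2 lam}
      ⊆ Prod.fst ⁻¹' T ∪ {z | ∃ v : (Fin n → ℝ) × (Fin p → ℝ),
        DualCert z.1 S b z.2 (n * lam) v.1 v.2 ∧ c ≤ ∑ k, v.1 k ^ 2} := by
    rintro ⟨X, w⟩ hz
    rw [Set.mem_union, or_iff_not_imp_left]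
    intro hT
    obtain ⟨r, δ, hr⟩ := exists_dualCert hn X βs w hlam S hS hz
    refine ⟨(r, δ), hr, ?_⟩
    have hT' : ∑ k, (∑ j, b j * X k j) ^ 2 < (M * (S.card * n) : ℝ) := not_le.1 hT
    have h1 := hr.norm_lower hb1 hb0
    have h2 : (0 : ℝ) ≤ ∑ k, r k ^ 2 := Finset.sum_nonneg fun _ _ => sq_nonneg _
    have h3 : (S.card : ℝ) ≤ M * n * ∑ k, r k ^ 2 := by
      have : (S.card : ℝ) * S.card ≤ S.card * (M * n * ∑ k, r k ^ 2) := by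
        nlinarith [mul_le_mul_of_nonneg_right hT'.le h2]
      exact le_of_mul_le_mul_left this hs'
    exact le_of_mul_le_mul_left (by linarith) (mul_pos hM' hn')
  refine (measure_mono hsub).trans ((measure_union_le _ _).trans (add_le_add ?_ ?_))
  · exact (measurePreserving_fst.measure_preimage_le _).trans
      (measure_sum_sq_ge_le hn hS0 hM b hb)
  · exact measure_dualCert_le S b (mul_pos hn' hlam).ne' hc ν

/-- Corollary 1(a): in the uniform Gaussian ensemble with `n = γ p` (linearly
underdetermined) and linear sparsity `s = α p`, the Lasso fails with probability
converging to one. -/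
theorem lasso_uniform_linear_converse
    (p s : ℕ → ℕ)
    (γ : ℝ) (hγ0 : 0 < γ) (hγ1 : γ < 1)
    (hγ : Tendsto (fun n : ℕ => (n : ℝ) / p n) atTop (nhds γ))
    (α : ℝ) (hα0 : 0 < α) (hα1 : α < 1)
    (hα : Tendsto (fun n => (s n : ℝ) / p n) atTop (nhds α))
    (hs_inf : Tendsto s atTop atTop)
    (hps_inf : Tendsto (fun n => p n - s n) atTop atTop)
    (βstar : ∀ n : ℕ, Fin (p n) → ℝ)
    (S : ∀ n : ℕ, Finset (Fin (p n)))
    (hSsupp : ∀ n i, i ∈ S n ↔ βstar n i ≠ 0)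
    (hScard : ∀ n, (S n).card = s n)
    (Ω : ℕ → Type) (mΩ : ∀ n, MeasurableSpace (Ω n))
    (P : ∀ n, Measure (Ω n)) (hP : ∀ n, IsProbabilityMeasure (P n))
    (X : ∀ n : ℕ, Ω n → Fin n → Fin (p n) → ℝ) (hXmeas : ∀ n, Measurable (X n))
    (hXlaw : ∀ n, Measure.map (X n) (P n) =
      Measure.pi (fun _ : Fin n => stdGaussian (Fin (p n))))
    (σ2 : ℝ) (hσ2 : 0 < σ2)
    (W : ∀ n : ℕ, Ω n → Fin n → ℝ) (hWmeas : ∀ n, Measurable (W n))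
    (hWlaw : ∀ n,
      Measure.map (W n) (P n) = Measure.pi (fun _ : Fin n => gaussianReal 0 σ2.toNNReal))
    (hindep : ∀ n, IndepFun (X n) (W n) (P n))
    (lam : ℕ → ℝ) (hlam : ∀ n, 0 < lam n)
    (hlam_mono : ∀ m n, m ≤ n → lam n ≤ lam m) :
    Tendsto (fun n => P n {ω | PropR (Matrix.of (X n ω)) (βstar n) (W n ω) (lam n)})
      atTop (nhds 0) := by
  have hratio : ∀ᶠ n : ℕ in atTop, α / γ / 2 * n ≤ s n := by
    have h := hα.div hγ hγ0.ne'
    filter_upwards [h.eventually (lt_mem_nhds (half_lt_self (div_pos hα0 hγ0))),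
      eventually_gt_atTop 0, hγ.eventually (lt_mem_nhds hγ0)] with n h1 h2 h3
    have h2' : (0 : ℝ) < n := by exact_mod_cast h2
    -- The ratio `n / p n` is positive, which excludes the junk value at `p n = 0`.
    have hp : (0 : ℝ) < p n := by
      by_contra! hp
      exact absurd h3 (not_lt.2 (div_nonpos_of_nonneg_of_nonpos h2'.le hp))
    simp only [Pi.div_apply] at h1
    rw [div_div_div_cancel_right₀ hp.ne', lt_div_iff₀ h2'] at h1
    exact h1.le
  rw [ENNReal.tendsto_nhds_zero]
  intro ε hε
  obtain ⟨M, hMε⟩ := ENNReal.exists_inv_nat_lt (ENNReal.half_pos hε.ne').ne'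
  have hM : 0 < M := Nat.pos_of_ne_zero (by rintro rfl; simp at hMε)
  have hM' : (0 : ℝ) < M := by exact_mod_cast hM
  set c : ℝ := α / γ / 2 / M
  have hc : 0 < c := by positivity
  have hq := (ENNReal.tendsto_pow_atTop_nhds_zero_of_lt_one
    (gaussian_Icc_lt_one (1 / √c))).comp hps_inf
  filter_upwards [hratio, eventually_gt_atTop 0, hs_inf.eventually_gt_atTop 0,
    (ENNReal.tendsto_nhds_zero.1 hq) (ε / 2) (ENNReal.half_pos hε.ne')] with n h1 h2 h3 h4
  have := hP n
  have hprob : IsProbabilityMeasure (Measure.pi fun _ : Fin n => gaussianReal 0 σ2.toNNReal) :=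
    inferInstance
  have hlaw : MeasurePreserving (fun ω => (X n ω, W n ω)) (P n)
      ((Measure.pi fun _ : Fin n => Measure.pi fun _ : Fin (p n) => gaussianReal 0 1).prod
        (Measure.pi fun _ : Fin n => gaussianReal 0 σ2.toNNReal)) := by
    refine ⟨(hXmeas n).prodMk (hWmeas n), ?_⟩
    rw [(indepFun_iff_map_prod_eq_prod_map_map (hXmeas n).aemeasurable
      (hWmeas n).aemeasurable).1 (hindep n), hXlaw n, hWlaw n]
    rfl
  have hcS : c * (M * n) ≤ (S n).card := by
    rw [hScard n]
    calc c * (M * n) = α / γ / 2 * n := by simp only [c]; field_simp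
      _ ≤ s n := h1
  have hle := measure_propR_le h2 hM (hSsupp n) (by rw [hScard n]; exact h3) hc hcS (hlam n)
    (Measure.pi fun _ : Fin n => gaussianReal 0 σ2.toNNReal)
  rw [hScard n] at hle
  calc P n {ω | PropR (Matrix.of (X n ω)) (βstar n) (W n ω) (lam n)}
      ≤ _ := hlaw.measure_preimage_le {z | PropR (Matrix.of z.1) (βstar n) z.2 (lam n)}
    _ ≤ _ := hle
    _ ≤ ε / 2 + ε / 2 := add_le_add hMε.le h4
    _ = ε := ENNReal.add_halves ε
end

section
/- (Corollary 1(b), linearly underdetermined setting, sublinear sparsity.) Consider the uniform Gaussian ensemble, and a sequence of problems in which n/p(n) → γ for some γ ∈ (0,1), s(n) → ∞, and s(n) log p(n) / p(n) → 0. Set ρ_n = min_{i∈S}|β*_i|. If the regularization sequence λ_n > 0 satisfies λ_n → 0, n λ_n² / log(p − s) → +∞, and (1/ρ_n) [ λ_n + √(log s / n) ] → 0, then the probability (over X and W) that property R(X, β*, W, λ_n) holds converges to 1 as n → ∞. -/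
/-! The proof is the primal-dual witness construction. Write `S` for the support, `z = sgn β*`, and let `βh`
be the solution of the Lasso restricted to `S` with signs `z` prescribed. It solves the full Lasso, with the
correct signs, as soon as `‖(X_Sᵀ X_S)⁻¹ (X_Sᵀ w - n λ z)‖_∞ < min |β*_i|` and every column `x_j`, `j ∉ S`,
has inner product of absolute value at most `n λ` with the residual
(`propR_of_witness`).

Everything is controlled through one spectral event, `X_Sᵀ X_S ⪰ (n/32) I`, which fails with vanishing
probability because `s log p = o(n)` (`prob_not_eigLB`: a chi-square lower tail and a union bound over a net
of integer points). On this event three families of Gaussian linear forms remain, each of the form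
`⟨G, f(Z)⟩` with `G` independent of `Z` and `‖f(Z)‖` bounded (`indep_linear_tail`, `column_tail`):

* the noise terms `((X_Sᵀ X_S)⁻¹ X_Sᵀ w)_i`, linear in `w`, with variance at most `32 σ² / n`;
* the terms `((X_Sᵀ X_S)⁻¹ z)_i`, which a leave-one-out identity (`coef_leave_one_out`) reduces to `⟨x_i, r⟩`
  with `r` a function of the columns in `S` other than `x_i`, and `‖r‖² ≤ 32 s / n`;
* the products `⟨x_j, residual⟩` for `j ∉ S`, where the residual does not involve `x_j` and has squared
  norm at most `‖w‖² + 32 n λ² s`.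

Since `s log p = o(n)`, `n λ² / log p → ∞`, `λ = o(ρ)` and `√(log s / n) = o(ρ)`, the correction is eventually
smaller than `ρ = min |β*_i|` except on events of vanishing probability: the union bounds over these families
tend to zero, and so does `P(‖w‖² ≥ B)` for the truncation level `B` (`prob_propR_ge`, `failBound_le`). -/

open MeasureTheory ProbabilityTheory Matrix Filter

/-! ### Deterministic conditions for sign recovery -/

/-- The Gram matrix `X_Tᵀ X_T` of the columns of `X` in `T`, completed by the identity outside `T`.
Keeping the full index type `Fin p` avoids matrices indexed by subtypes; the matrix is block diagonal,
so its inverse restricts to `(X_Tᵀ X_T)⁻¹` on `T`. -/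
noncomputable def gramPad {n p : ℕ} (T : Finset (Fin p)) (X : Fin n → Fin p → ℝ) :
    Matrix (Fin p) (Fin p) ℝ :=
  Matrix.of fun i j => if i ∈ T ∧ j ∈ T then ∑ k, X k i * X k j else if i = j then 1 else 0

/-- The vector `(X_Tᵀ X_T)⁻¹ y_T`, extended by zero outside `T`. The matrix inverse is junk when
`X_Tᵀ X_T` is singular. -/
noncomputable def coef {n p : ℕ} (T : Finset (Fin p)) (X : Fin n → Fin p → ℝ)
    (y : Fin p → ℝ) : Fin p → ℝ :=
  (gramPad T X)⁻¹ *ᵥ (fun i => if i ∈ T then y i else 0)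

/-- The vector `X_T (X_Tᵀ X_T)⁻¹ y_T`: the vector in the span of the columns in `T` whose inner
product with the `i`-th column is `y i` for every `i ∈ T` (see `dualVec_spec`). -/
noncomputable def dualVec {n p : ℕ} (T : Finset (Fin p)) (X : Fin n → Fin p → ℝ)
    (y : Fin p → ℝ) : Fin n → ℝ :=
  fun k => ∑ j ∈ T, X k j * coef T X y j

/-- `X_Tᵀ X_T ⪰ κ I`, i.e. `‖X_T v‖² ≥ κ ‖v_T‖²` for every `v`. -/
def EigLB {n p : ℕ} (T : Finset (Fin p)) (X : Fin n → Fin p → ℝ) (κ : ℝ) : Prop :=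
  ∀ v : Fin p → ℝ, κ * ∑ j ∈ T, v j ^ 2 ≤ ∑ k, (∑ j ∈ T, X k j * v j) ^ 2

lemma sum_mul_fit {n p : ℕ} (T : Finset (Fin p)) (X : Fin n → Fin p → ℝ)
    (v : Fin p → ℝ) (r : Fin n → ℝ) :
    ∑ k, r k * (∑ j ∈ T, X k j * v j) = ∑ j ∈ T, v j * ∑ k, X k j * r k := by
  simp_rw [Finset.mul_sum]
  rw [Finset.sum_comm]
  refine Finset.sum_congr rfl fun j _ => Finset.sum_congr rfl fun k _ => by ring

lemma EigLB.mono {n p : ℕ} {T S : Finset (Fin p)} {X : Fin n → Fin p → ℝ} {κ : ℝ}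
    (h : EigLB S X κ) (hTS : T ⊆ S) : EigLB T X κ := by
  intro v
  have := h (fun j => if j ∈ T then v j else 0)
  simp only [mul_ite, mul_zero, ite_pow, ne_eq, OfNat.ofNat_ne_zero, not_false_eq_true, zero_pow,
    Finset.sum_ite_mem, Finset.inter_eq_right.2 hTS] at this
  exact this

lemma gramPad_mulVec_mem {n p : ℕ} (T : Finset (Fin p)) (X : Fin n → Fin p → ℝ)
    (v : Fin p → ℝ) {i : Fin p} (hi : i ∈ T) :
    (gramPad T X *ᵥ v) i = ∑ k, X k i * ∑ j ∈ T, X k j * v j := by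
  simp only [Matrix.mulVec, dotProduct, gramPad, Matrix.of_apply, hi, true_and]
  have : ∀ x : Fin p, (if x ∈ T then ∑ k, X k i * X k x else if i = x then 1 else 0) * v x
      = if x ∈ T then (∑ k, X k i * X k x) * v x else 0 := by
    intro x
    split_ifs with h1 h2
    · rfl
    · subst h2; exact absurd hi h1
    · simp
  simp_rw [this]
  rw [Finset.sum_ite_mem, Finset.univ_inter]
  simp_rw [Finset.mul_sum, Finset.sum_mul]
  rw [Finset.sum_comm]
  exact Finset.sum_congr rfl fun k _ => Finset.sum_congr rfl fun j _ => by ring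

lemma gramPad_mulVec_notMem {n p : ℕ} (T : Finset (Fin p)) (X : Fin n → Fin p → ℝ)
    (v : Fin p → ℝ) {i : Fin p} (hi : i ∉ T) :
    (gramPad T X *ᵥ v) i = v i := by
  simp [Matrix.mulVec, dotProduct, gramPad, hi]

lemma gramPad_isUnit {n p : ℕ} {T : Finset (Fin p)} {X : Fin n → Fin p → ℝ} {κ : ℝ}
    (hκ : 0 < κ) (h : EigLB T X κ) : IsUnit (gramPad T X).det := by
  rw [isUnit_iff_ne_zero]
  intro h0
  obtain ⟨v, hv, hv0⟩ := Matrix.exists_mulVec_eq_zero_iff.2 h0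
  apply hv
  have hout : ∀ i ∉ T, v i = 0 := fun i hi => by
    rw [← gramPad_mulVec_notMem T X v hi, hv0]; rfl
  have hin : ∀ i ∈ T, ∑ k, X k i * ∑ j ∈ T, X k j * v j = 0 := fun i hi => by
    rw [← gramPad_mulVec_mem T X v hi, hv0]; rfl
  have h1 : ∑ k, (∑ j ∈ T, X k j * v j) ^ 2 = 0 := by
    simp_rw [sq]
    rw [sum_mul_fit]
    exact Finset.sum_eq_zero fun j hj => by rw [hin j hj, mul_zero]
  have h2 : ∑ j ∈ T, v j ^ 2 ≤ 0 := by
    have := h v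
    rw [h1] at this
    by_contra hc
    push Not at hc
    have := mul_pos hκ hc
    linarith
  have h3 := (Finset.sum_eq_zero_iff_of_nonneg (fun j _ => sq_nonneg (v j))).1
    (le_antisymm h2 (Finset.sum_nonneg fun j _ => sq_nonneg (v j)))
  funext i
  by_cases hi : i ∈ T
  · simpa using h3 i hi
  · exact hout i hi

lemma dualVec_spec {n p : ℕ} {T : Finset (Fin p)} {X : Fin n → Fin p → ℝ} {κ : ℝ}
    (hκ : 0 < κ) (h : EigLB T X κ) (y : Fin p → ℝ) {i : Fin p} (hi : i ∈ T) :
    ∑ k, X k i * dualVec T X y k = y i := by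
  have := gramPad_mulVec_mem T X (coef T X y) hi
  rw [coef, Matrix.mulVec_mulVec, Matrix.mul_nonsing_inv _ (gramPad_isUnit hκ h),
    Matrix.one_mulVec, if_pos hi] at this
  exact this.symm

lemma sum_mul_dualVec {n p : ℕ} (T : Finset (Fin p)) (X : Fin n → Fin p → ℝ)
    (y : Fin p → ℝ) (r : Fin n → ℝ) :
    ∑ k, r k * dualVec T X y k = ∑ j ∈ T, coef T X y j * ∑ k, X k j * r k :=
  sum_mul_fit T X _ r

/-- `‖X_T (X_Tᵀ X_T)⁻¹ y‖² = yᵀ (X_Tᵀ X_T)⁻¹ y ≤ ‖y‖² / κ`. -/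
lemma dualVec_norm {n p : ℕ} {T : Finset (Fin p)} {X : Fin n → Fin p → ℝ} {κ : ℝ}
    (hκ : 0 < κ) (h : EigLB T X κ) (y : Fin p → ℝ) :
    ∑ k, dualVec T X y k ^ 2 ≤ (∑ j ∈ T, y j ^ 2) / κ := by
  have h1 : ∑ k, dualVec T X y k ^ 2 = ∑ j ∈ T, coef T X y j * y j := by
    simp_rw [sq]
    rw [sum_mul_dualVec]
    exact Finset.sum_congr rfl fun j hj => by rw [dualVec_spec hκ h y hj]
  have h2 := h (coef T X y)
  change _ ≤ ∑ k, dualVec T X y k ^ 2 at h2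
  have h3 := Finset.sum_mul_sq_le_sq_mul_sq T (coef T X y) y
  rw [← h1] at h3
  set N := ∑ k, dualVec T X y k ^ 2
  set C := ∑ j ∈ T, coef T X y j ^ 2
  have hN : 0 ≤ N := Finset.sum_nonneg fun _ _ => sq_nonneg _
  have hY : 0 ≤ ∑ j ∈ T, y j ^ 2 := Finset.sum_nonneg fun _ _ => sq_nonneg _
  rw [le_div_iff₀ hκ]
  rcases hN.eq_or_lt with h0 | h0
  · rw [← h0]; simpa using hY
  · have : N * (N * κ) ≤ N * ∑ j ∈ T, y j ^ 2 := by
      nlinarith [mul_le_mul_of_nonneg_right h2 hY]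
    exact le_of_mul_le_mul_left this h0

/-- Leave-one-out bound on `((X_Sᵀ X_S)⁻¹ z)_i`. Let `r` be the vector interpolating `z` on `S \ {i}`
only, and `q` the one interpolating `z` on `S`. Then `q - r = X_S (u - v)` is orthogonal to every column
in `S \ {i}`, so `κ u_i² ≤ ‖q - r‖² = u_i (z_i - ⟨x_i, r⟩)`. For a Gaussian design `r` is independent
of `x_i`, so the right-hand side is controlled without any estimate in `ℓ^∞` operator norm. -/
lemma coef_leave_one_out {n p : ℕ} {S : Finset (Fin p)} {X : Fin n → Fin p → ℝ} {κ : ℝ}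
    (hκ : 0 < κ) (h : EigLB S X κ) (z : Fin p → ℝ) {i : Fin p} (hi : i ∈ S) :
    |coef S X z i| ≤ (|z i| + |∑ k, X k i * dualVec (S.erase i) X z k|) / κ := by
  set u := coef S X z with hu
  set v : Fin p → ℝ := fun j => if j = i then 0 else coef (S.erase i) X z j with hv
  set r := dualVec (S.erase i) X z with hr
  set q := dualVec S X z with hq
  have hrv : ∀ k, r k = ∑ j ∈ S, X k j * v j := by
    intro k
    rw [← Finset.add_sum_erase S _ hi]
    simp only [hv, if_true, mul_zero, zero_add, hr, dualVec]
    exact Finset.sum_congr rfl fun j hj => by rw [if_neg (Finset.ne_of_mem_erase hj)]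
  have hqr : ∀ k, q k - r k = ∑ j ∈ S, X k j * (u j - v j) := by
    intro k
    rw [hrv k]
    simp only [hq, dualVec, mul_sub, Finset.sum_sub_distrib, hu]
  have h1 : ∑ k, (q k - r k) ^ 2 = u i * (z i - ∑ k, X k i * r k) := by
    have : ∀ k, (q k - r k) ^ 2 = (q k - r k) * ∑ j ∈ S, X k j * (u j - v j) := fun k => by
      rw [← hqr k, sq]
    simp_rw [this]
    rw [sum_mul_fit S X (fun j => u j - v j), ← Finset.add_sum_erase S _ hi]
    rw [Finset.sum_eq_zero (s := S.erase i), add_zero]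
    · simp only [hv, if_true, sub_zero, mul_sub, Finset.sum_sub_distrib]
      rw [dualVec_spec hκ h z hi]
    · intro j hj
      simp only [mul_sub, Finset.sum_sub_distrib]
      rw [dualVec_spec hκ h z (Finset.mem_of_mem_erase hj),
        dualVec_spec hκ (h.mono (Finset.erase_subset i S)) z hj, sub_self]
  have h2 : κ * u i ^ 2 ≤ ∑ k, (q k - r k) ^ 2 := by
    simp_rw [hqr]
    refine le_trans ?_ (h (fun j => u j - v j))
    refine mul_le_mul_of_nonneg_left ?_ hκ.le
    have := Finset.single_le_sum (f := fun j => (u j - v j) ^ 2) (fun j _ => sq_nonneg _) hi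
    simpa [hv] using this
  rw [h1] at h2
  have h3 : u i * (z i - ∑ k, X k i * r k) ≤ |u i| * (|z i| + |∑ k, X k i * r k|) := by
    refine (le_abs_self _).trans ?_
    rw [abs_mul]
    exact mul_le_mul_of_nonneg_left (abs_sub _ _) (abs_nonneg _)
  rw [le_div_iff₀ hκ]
  rcases (abs_nonneg (u i)).eq_or_lt with h0 | h0
  · rw [← h0, zero_mul]; positivity
  · rw [← sq_abs] at h2
    have : |u i| * (|u i| * κ) ≤ |u i| * (|z i| + |∑ k, X k i * r k|) := by nlinarith
    exact le_of_mul_le_mul_left this h0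

/-- The noise part `((X_Sᵀ X_S)⁻¹ X_Sᵀ w)_i` of the least-squares error, as a linear form in `w`. -/
lemma coef_noise {n p : ℕ} {S : Finset (Fin p)} {X : Fin n → Fin p → ℝ} {κ : ℝ}
    (hκ : 0 < κ) (h : EigLB S X κ) (w : Fin n → ℝ) {i : Fin p} (hi : i ∈ S) :
    coef S X (fun j => ∑ k, X k j * w k) i = ∑ k, w k * dualVec S X (Pi.single i 1) k := by
  set y : Fin p → ℝ := fun j => ∑ k, X k j * w k with hy
  have h1 : ∑ k, dualVec S X y k * dualVec S X (Pi.single i 1) k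
      = ∑ k, w k * dualVec S X (Pi.single i 1) k := by
    rw [sum_mul_dualVec, sum_mul_dualVec]
    exact Finset.sum_congr rfl fun j hj => by rw [dualVec_spec hκ h y hj]
  have h2 : ∑ k, dualVec S X (Pi.single i 1) k * dualVec S X y k = coef S X y i := by
    rw [sum_mul_dualVec, ← Finset.add_sum_erase S _ hi, Finset.sum_eq_zero (s := S.erase i),
      add_zero, dualVec_spec hκ h _ hi]
    · simp
    · intro j hj
      rw [dualVec_spec hκ h _ (Finset.mem_of_mem_erase hj)]
      simp [Finset.ne_of_mem_erase hj]
  rw [← h1, ← h2]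
  exact Finset.sum_congr rfl fun k _ => mul_comm _ _

/-- The residual `(I - Π_S) w + τ X_S (X_Sᵀ X_S)⁻¹ z` of the Lasso restricted to `S`, where `Π_S` is
the projection on the span of the columns in `S`, `z` the sign vector and `τ = n λ`. -/
noncomputable def resid {n p : ℕ} (S : Finset (Fin p)) (X : Fin n → Fin p → ℝ)
    (w : Fin n → ℝ) (z : Fin p → ℝ) (τ : ℝ) : Fin n → ℝ :=
  fun k => w k - dualVec S X (fun j => ∑ k, X k j * w k) k + τ * dualVec S X z k

/-- The two parts of the residual are orthogonal, and `‖(I - Π_S) w‖ ≤ ‖w‖`. -/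
lemma resid_norm {n p : ℕ} {S : Finset (Fin p)} {X : Fin n → Fin p → ℝ} {κ : ℝ}
    (hκ : 0 < κ) (h : EigLB S X κ) (w : Fin n → ℝ) (z : Fin p → ℝ) (τ : ℝ) :
    ∑ k, resid S X w z τ k ^ 2 ≤ ∑ k, w k ^ 2 + τ ^ 2 * ((∑ j ∈ S, z j ^ 2) / κ) := by
  set y : Fin p → ℝ := fun j => ∑ k, X k j * w k with hy
  set e : Fin n → ℝ := fun k => w k - dualVec S X y k with he
  have horth : ∀ y' : Fin p → ℝ, ∑ k, e k * dualVec S X y' k = 0 := by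
    intro y'
    rw [sum_mul_dualVec]
    refine Finset.sum_eq_zero fun j hj => ?_
    simp only [he, mul_sub, Finset.sum_sub_distrib]
    rw [dualVec_spec hκ h y hj]
    simp [hy]
  have h1 : ∑ k, resid S X w z τ k ^ 2 = ∑ k, e k ^ 2 + τ ^ 2 * ∑ k, dualVec S X z k ^ 2 := by
    have : ∀ k, resid S X w z τ k ^ 2
        = e k ^ 2 + τ ^ 2 * dualVec S X z k ^ 2 + 2 * τ * (e k * dualVec S X z k) := fun k => by
      simp only [resid, he]; ring
    simp_rw [this, Finset.sum_add_distrib, ← Finset.mul_sum]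
    rw [horth z]; ring
  have h2 : ∑ k, w k ^ 2 = ∑ k, e k ^ 2 + ∑ k, dualVec S X y k ^ 2 := by
    have : ∀ k, w k ^ 2
        = e k ^ 2 + dualVec S X y k ^ 2 + 2 * (e k * dualVec S X y k) := fun k => by
      simp only [he]; ring
    simp_rw [this, Finset.sum_add_distrib, ← Finset.mul_sum]
    rw [horth y]; ring
  have h3 : 0 ≤ ∑ k, dualVec S X y k ^ 2 := Finset.sum_nonneg fun _ _ => sq_nonneg _
  have h4 := mul_le_mul_of_nonneg_left (dualVec_norm hκ h z) (sq_nonneg τ)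
  rw [h1, h2]
  linarith

lemma sgn_mul_self (t : ℝ) : sgn t * t = |t| := by
  unfold sgn
  split_ifs with h1 h2
  · rw [abs_of_pos h1, one_mul]
  · rw [abs_of_neg h2]; ring
  · have : t = 0 := by linarith
    simp [this]

lemma abs_sgn_le (t : ℝ) : |sgn t| ≤ 1 := by
  unfold sgn
  split_ifs <;> simp

lemma sgn_eq_of_close {a b : ℝ} (h : |b - a| < |a|) : sgn b = sgn a := by
  unfold sgn
  rcases lt_trichotomy a 0 with ha | ha | ha
  · rw [abs_of_neg ha] at h
    have := abs_lt.1 h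
    rw [if_neg (by linarith), if_pos (by linarith), if_neg (by linarith), if_pos ha]
  · subst ha; simp at h; exact absurd h (not_lt.2 (abs_nonneg _))
  · rw [abs_of_pos ha] at h
    have := abs_lt.1 h
    rw [if_pos (by linarith), if_pos ha]

/-- The Karush–Kuhn–Tucker conditions are sufficient for optimality in the Lasso. -/
lemma lasso_kkt {n p : ℕ} (hn : 0 < n) (X : Matrix (Fin n) (Fin p) ℝ) (Y : Fin n → ℝ)
    {lam : ℝ} (βh : Fin p → ℝ)
    (hle : ∀ j, |∑ k, X k j * (Y k - ∑ i, X k i * βh i)| ≤ n * lam)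
    (heq : ∀ j, (∑ k, X k j * (Y k - ∑ i, X k i * βh i)) * βh j = n * lam * |βh j|)
    (β : Fin p → ℝ) : lassoObj X Y lam βh ≤ lassoObj X Y lam β := by
  have hn' : (0 : ℝ) < n := by exact_mod_cast hn
  set d : Fin n → ℝ := fun k => Y k - ∑ i, X k i * βh i with hd
  have h1 : ∀ k, d k ^ 2 - 2 * (d k * ∑ j, X k j * (β j - βh j))
      ≤ (Y k - ∑ j, X k j * β j) ^ 2 := by
    intro k
    have : Y k - ∑ j, X k j * β j = d k - ∑ j, X k j * (β j - βh j) := by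
      simp only [hd, mul_sub, Finset.sum_sub_distrib]; ring
    rw [this]
    nlinarith [sq_nonneg (∑ j, X k j * (β j - βh j))]
  have h2 := Finset.sum_le_sum fun k (_ : k ∈ Finset.univ) => h1 k
  rw [Finset.sum_sub_distrib, ← Finset.mul_sum, sum_mul_fit Finset.univ X] at h2
  have h3 : ∑ j, (β j - βh j) * ∑ k, X k j * d k ≤ n * lam * (∑ j, |β j| - ∑ j, |βh j|) := by
    rw [← Finset.sum_sub_distrib, Finset.mul_sum]
    refine Finset.sum_le_sum fun j _ => ?_
    have ha := hle j
    have hb := heq j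
    have hc : (∑ k, X k j * d k) * β j ≤ n * lam * |β j| := by
      refine (le_abs_self _).trans ?_
      rw [abs_mul]
      exact mul_le_mul_of_nonneg_right ha (abs_nonneg _)
    change (∑ k, X k j * d k) * βh j = _ at hb
    linarith
  unfold lassoObj
  change 1 / (2 * (n : ℝ)) * ∑ k, d k ^ 2 + _ ≤ _
  have h4 : 1 / (2 * (n : ℝ)) * (∑ k, d k ^ 2) ≤ 1 / (2 * (n : ℝ)) *
      (∑ k, (Y k - ∑ j, X k j * β j) ^ 2 + 2 * (n * lam * (∑ j, |β j| - ∑ j, |βh j|))) := by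
    refine mul_le_mul_of_nonneg_left ?_ (by positivity)
    linarith
  have h5 : 1 / (2 * (n : ℝ)) *
      (∑ k, (Y k - ∑ j, X k j * β j) ^ 2 + 2 * (n * lam * (∑ j, |β j| - ∑ j, |βh j|)))
      = 1 / (2 * (n : ℝ)) * ∑ k, (Y k - ∑ j, X k j * β j) ^ 2
        + lam * (∑ j, |β j| - ∑ j, |βh j|) := by
    field_simp
  linarith

/-- Primal-dual witness. The vector `βh = β* + (X_Sᵀ X_S)⁻¹ (X_Sᵀ w - n λ sgn β*)` on `S`, extended by
zero, has the signs of `β*` as soon as the correction is smaller than `ρ ≤ min |β*_i|`; its residual is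
`resid S X w (sgn β*) (n λ)`, and strict signs on `S` together with `h4` off `S` give the
Karush–Kuhn–Tucker conditions. -/
lemma propR_of_witness {n p : ℕ} (hn : 0 < n) (X : Fin n → Fin p → ℝ) (βs : Fin p → ℝ)
    (w : Fin n → ℝ) {lam ρ κ : ℝ} (hlam : 0 < lam) (S : Finset (Fin p))
    (hS : ∀ i, i ∈ S ↔ βs i ≠ 0) (hκ : 0 < κ) (hE : EigLB S X κ)
    (h2 : ∀ i ∈ S, |∑ k, X k i * dualVec (S.erase i) X (fun j => sgn (βs j)) k| ≤ 1)
    (h3 : ∀ i ∈ S, |∑ k, w k * dualVec S X (Pi.single i 1) k| ≤ ρ / 2)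
    (h4 : ∀ j ∉ S, |∑ k, X k j * resid S X w (fun j => sgn (βs j)) (n * lam) k| ≤ n * lam)
    (hρ : ∀ i ∈ S, ρ ≤ |βs i|) (hlρ : n * lam * (2 / κ) < ρ / 2) :
    PropR (Matrix.of X) βs w lam := by
  have hn' : (0 : ℝ) < n := by exact_mod_cast hn
  have hnl : 0 < n * lam := mul_pos hn' hlam
  set z : Fin p → ℝ := fun j => sgn (βs j) with hz
  set y : Fin p → ℝ := fun j => ∑ k, X k j * w k with hy
  set Δ : Fin p → ℝ := fun j => coef S X y j - n * lam * coef S X z j with hΔ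
  set βh : Fin p → ℝ := fun j => if j ∈ S then βs j + Δ j else 0 with hβh
  have hsmall : ∀ i ∈ S, |Δ i| < |βs i| := by
    intro i hi
    have ha := coef_leave_one_out hκ hE z hi
    have hb : |coef S X z i| ≤ 2 / κ := by
      refine ha.trans (div_le_div_of_nonneg_right ?_ hκ.le)
      have := abs_sgn_le (βs i)
      have := h2 i hi
      simp only [hz] at *
      linarith
    have hc := h3 i hi
    rw [← coef_noise hκ hE w hi] at hc
    have hd : |Δ i| ≤ |coef S X y i| + n * lam * |coef S X z i| := by
      have := abs_sub (coef S X y i) (n * lam * coef S X z i)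
      rwa [abs_mul (n * lam), abs_of_pos hnl] at this
    have := mul_le_mul_of_nonneg_left hb hnl.le
    have := hρ i hi
    linarith
  have hsgn : ∀ i, sgn (βh i) = sgn (βs i) := by
    intro i
    by_cases hi : i ∈ S
    · apply sgn_eq_of_close
      simp only [hβh, if_pos hi, add_sub_cancel_left]
      exact hsmall i hi
    · have : βs i = 0 := by
        by_contra h
        exact hi ((hS i).2 h)
      simp [hβh, hi, this]
  have hres : ∀ k, ((∑ j, X k j * βs j) + w k) - ∑ i, X k i * βh i
      = resid S X w z (n * lam) k := by
    intro k
    have e1 : ∑ j, X k j * βs j = ∑ j ∈ S, X k j * βs j := by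
      symm
      apply Finset.sum_subset (Finset.subset_univ S)
      intro j _ hj
      have : βs j = 0 := by
        by_contra h
        exact hj ((hS j).2 h)
      simp [this]
    have e2 : ∑ i, X k i * βh i = ∑ j ∈ S, X k j * (βs j + Δ j) := by
      simp only [hβh, mul_ite, mul_zero, Finset.sum_ite_mem, Finset.univ_inter]
    rw [e1, e2]
    simp only [resid, dualVec, hΔ, mul_add, mul_sub, Finset.sum_add_distrib,
      Finset.sum_sub_distrib, Finset.mul_sum]
    have : ∑ j ∈ S, X k j * (n * lam * coef S X z j)
        = ∑ j ∈ S, n * lam * (X k j * coef S X z j) :=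
      Finset.sum_congr rfl fun j _ => by ring
    rw [this]
    ring
  have hkkt : ∀ l ∈ S, ∑ k, X k l * resid S X w z (n * lam) k = n * lam * z l := by
    intro l hl
    have e : ∀ k, X k l * resid S X w z (n * lam) k
        = X k l * w k - X k l * dualVec S X y k + n * lam * (X k l * dualVec S X z k) := by
      intro k; simp only [resid, hy]; ring
    simp_rw [e, Finset.sum_add_distrib, Finset.sum_sub_distrib, ← Finset.mul_sum]
    rw [dualVec_spec hκ hE y hl, dualVec_spec hκ hE z hl]
    simp [hy]
  refine ⟨βh, ?_, hsgn⟩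
  intro β
  refine lasso_kkt hn (Matrix.of X) _ βh ?_ ?_ β
  · intro j
    simp only [Matrix.of_apply, hres]
    by_cases hj : j ∈ S
    · rw [hkkt j hj, abs_mul, abs_of_pos hnl]
      exact mul_le_of_le_one_right hnl.le (abs_sgn_le _)
    · exact h4 j hj
  · intro j
    simp only [Matrix.of_apply, hres]
    by_cases hj : j ∈ S
    · rw [hkkt j hj, mul_assoc]
      simp only [hz]
      rw [← hsgn j, sgn_mul_self]
    · simp [hβh, hj]

/-! ### Tails of Gaussian linear forms, and measurability of the witness -/

lemma map_sum_gaussian {ι Ω : Type*} {mΩ : MeasurableSpace Ω} {P : Measure Ω}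
    [IsProbabilityMeasure P] {Y : ι → Ω → ℝ} (hY : iIndepFun Y P) (hm : ∀ i, Measurable (Y i))
    {v : NNReal} (hlaw : ∀ i, P.map (Y i) = gaussianReal 0 v) (a : ι → ℝ) (T : Finset ι) :
    P.map (fun ω => ∑ i ∈ T, a i * Y i ω) = gaussianReal 0 ((∑ i ∈ T, a i ^ 2).toNNReal * v) := by
  classical
  induction T using Finset.induction_on with
  | empty => simp [Measure.map_const, gaussianReal_zero_var]
  | insert i T hi ih =>
    have h1 : iIndepFun (fun i ω => a i * Y i ω) P :=
      hY.comp (fun i x => a i * x) (fun i => by fun_prop)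
    have h2 := (h1.indepFun_finsetSum_of_notMem (fun i => by fun_prop) hi).symm
    have h3 : P.map (fun ω => a i * Y i ω)
        = gaussianReal 0 (NNReal.mk (a i ^ 2) (sq_nonneg _) * v) := by
      have : (fun ω => a i * Y i ω) = (fun x => a i * x) ∘ Y i := rfl
      rw [this, ← Measure.map_map (by fun_prop) (hm i), hlaw i, gaussianReal_map_const_mul, mul_zero]
    have h4 : (∑ j ∈ T, fun ω => a j * Y j ω) = fun ω => ∑ j ∈ T, a j * Y j ω := by
      ext ω; simp
    rw [h4] at h2
    have h5 := gaussianReal_add_gaussianReal_of_indepFun h2 h3 ih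
    have h6 : (fun ω => ∑ j ∈ insert i T, a j * Y j ω)
        = (fun ω => a i * Y i ω) + fun ω => ∑ j ∈ T, a j * Y j ω := by
      ext ω; simp [Finset.sum_insert hi]
    rw [h6, h5, add_zero, Finset.sum_insert hi, Real.toNNReal_add (sq_nonneg _)
      (Finset.sum_nonneg fun _ _ => sq_nonneg _), add_mul]
    congr
    exact (max_eq_left (sq_nonneg _)).symm

/-- The bound `V` on the variance may be zero: then the right-hand side is `2`, by `x / 0 = 0`. -/
lemma gaussian_tail {c : NNReal} {V t : ℝ} (hc : (c : ℝ) ≤ V) (ht : 0 ≤ t) :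
    (gaussianReal 0 c).real {x | t ≤ |x|} ≤ 2 * Real.exp (-t ^ 2 / (2 * V)) := by
  have hV : 0 ≤ V := c.2.trans hc
  have h : HasSubgaussianMGF id V.toNNReal (gaussianReal 0 c) := by
    refine ⟨fun s => integrable_exp_mul_gaussianReal s, fun s => ?_⟩
    rw [mgf_id_gaussianReal, Real.coe_toNNReal _ hV]
    simp only [zero_mul, zero_add]
    apply Real.exp_le_exp.2
    have := mul_le_mul_of_nonneg_right hc (sq_nonneg s)
    linarith
  have h1 := h.measure_ge_le ht
  have h2 := h.neg.measure_ge_le ht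
  rw [Real.coe_toNNReal _ hV] at h1 h2
  have h3 : {x : ℝ | t ≤ |x|} ⊆ {x | t ≤ id x} ∪ {x | t ≤ (-id : ℝ → ℝ) x} := by
    intro x hx
    simpa [le_abs] using hx
  have := (measureReal_mono h3 (μ := gaussianReal 0 c)).trans (measureReal_union_le _ _)
  linarith

/-- Tail of `⟨G, f(Z)⟩` for a Gaussian vector `G` independent of `Z`: given `Z` with `‖f(Z)‖² ≤ V`, it is
a centred Gaussian of variance at most `V v`. -/
lemma indep_linear_tail {n : ℕ} {Ω 𝓩 : Type*} {mΩ : MeasurableSpace Ω} {m𝓩 : MeasurableSpace 𝓩}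
    {P : Measure Ω} [IsProbabilityMeasure P] {G : Ω → Fin n → ℝ} {Z : Ω → 𝓩}
    (hG : Measurable G) (hZ : Measurable Z) (hGZ : IndepFun G Z P) {v : NNReal}
    (hlaw : P.map G = Measure.pi fun _ => gaussianReal 0 v)
    {f : 𝓩 → Fin n → ℝ} (hf : ∀ k, Measurable fun z => f z k) {t V : ℝ} (ht : 0 ≤ t) :
    P.real {ω | t ≤ |∑ k, G ω k * f (Z ω) k| ∧ ∑ k, f (Z ω) k ^ 2 ≤ V} ≤
      2 * Real.exp (-t ^ 2 / (2 * (V * v))) := by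
  set A : Set ((Fin n → ℝ) × 𝓩) :=
    {x | t ≤ |∑ k, x.1 k * f x.2 k| ∧ ∑ k, f x.2 k ^ 2 ≤ V} with hA
  have hf' : ∀ k, Measurable fun x : (Fin n → ℝ) × 𝓩 => f x.2 k := fun k =>
    (hf k).comp measurable_snd
  have hAm : MeasurableSet A := by
    have m1 : Measurable fun x : (Fin n → ℝ) × 𝓩 => |∑ k, x.1 k * f x.2 k| :=
      (Finset.measurable_sum _ fun k _ => Measurable.mul (by fun_prop) (hf' k)).abs
    have m2 : Measurable fun x : (Fin n → ℝ) × 𝓩 => ∑ k, f x.2 k ^ 2 :=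
      Finset.measurable_sum _ fun k _ => (hf' k).pow_const 2
    exact (measurableSet_le measurable_const m1).inter (measurableSet_le m2 measurable_const)
  have hprod := hGZ.map_prod_eq_prod_map_map hG.aemeasurable hZ.aemeasurable
  have e1 : P {ω | t ≤ |∑ k, G ω k * f (Z ω) k| ∧ ∑ k, f (Z ω) k ^ 2 ≤ V}
      = (Measure.pi fun _ => gaussianReal 0 v).prod (P.map Z) A := by
    rw [← hlaw, ← hprod, Measure.map_apply (hG.prodMk hZ) hAm]
    rfl
  have : IsProbabilityMeasure (P.map Z) := Measure.isProbabilityMeasure_map hZ.aemeasurable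
  rw [measureReal_def, e1, Measure.prod_apply_symm hAm]
  refine ENNReal.toReal_le_of_le_ofReal (by positivity) ?_
  refine (lintegral_mono (g := fun _ => ENNReal.ofReal (2 * Real.exp (-t ^ 2 / (2 * (V * v)))))
    fun z => ?_).trans (by simp)
  by_cases hz : ∑ k, f z k ^ 2 ≤ V
  · have hi : iIndepFun (fun (k : Fin n) (g : Fin n → ℝ) => g k)
        (Measure.pi fun _ : Fin n => gaussianReal 0 v) :=
      iIndepFun_pi (X := fun _ x => x) (fun _ => aemeasurable_id)
    have hl := map_sum_gaussian hi (fun k => measurable_pi_apply k)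
      (fun k => (measurePreserving_eval (fun _ : Fin n => gaussianReal 0 v) k).map_eq)
      (f z) Finset.univ
    have e2 : (fun x => (x, z)) ⁻¹' A
        = (fun g : Fin n → ℝ => ∑ k, f z k * g k) ⁻¹' {x | t ≤ |x|} := by
      ext g
      simp [hA, hz, mul_comm]
    rw [e2, ← Measure.map_apply (by fun_prop) (measurableSet_le measurable_const (by fun_prop)), hl]
    rw [← ofReal_measureReal]
    refine ENNReal.ofReal_le_ofReal (gaussian_tail ?_ ht)
    rw [NNReal.coe_mul, Real.coe_toNNReal _ (Finset.sum_nonneg fun _ _ => sq_nonneg _)]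
    exact mul_le_mul_of_nonneg_right hz v.2
  · have e2 : (fun x => (x, z)) ⁻¹' A = ∅ := by
      ext g
      simp [hA, hz]
    rw [e2]; simp

lemma measurable_matrix_inv_apply {p : ℕ} {𝓩 : Type*} {m𝓩 : MeasurableSpace 𝓩}
    {A : 𝓩 → Matrix (Fin p) (Fin p) ℝ} (hA : ∀ i j, Measurable fun z => A z i j) (i j : Fin p) :
    Measurable fun z => (A z)⁻¹ i j := by
  have hdet : ∀ B : 𝓩 → Matrix (Fin p) (Fin p) ℝ, (∀ i j, Measurable fun z => B z i j) →
      Measurable fun z => (B z).det := by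
    intro B hB
    simp_rw [Matrix.det_apply]
    exact Finset.measurable_sum _ fun σ _ =>
      Measurable.const_smul (Finset.measurable_prod _ fun k _ => hB _ _) _
  simp_rw [Matrix.inv_def, Ring.inverse_eq_inv', Matrix.smul_apply, smul_eq_mul,
    Matrix.adjugate_apply]
  refine (hdet A hA).inv.mul (hdet _ fun a b => ?_)
  simp only [Matrix.updateRow_apply]
  split_ifs
  · exact measurable_const
  · exact hA a b

lemma measurable_dualVec {n p : ℕ} {𝓩 : Type*} {m𝓩 : MeasurableSpace 𝓩} (T : Finset (Fin p))
    {X : 𝓩 → Fin n → Fin p → ℝ} {y : 𝓩 → Fin p → ℝ} (hX : ∀ k j, Measurable fun z => X z k j)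
    (hy : ∀ j, Measurable fun z => y z j) (k : Fin n) :
    Measurable fun z => dualVec T (X z) (y z) k := by
  unfold dualVec coef
  refine Finset.measurable_sum _ fun j _ => (hX k j).mul ?_
  simp only [Matrix.mulVec, dotProduct]
  refine Finset.measurable_sum _ fun i _ => Measurable.mul ?_ ?_
  · refine measurable_matrix_inv_apply (fun a b => ?_) j i
    simp only [gramPad, Matrix.of_apply]
    split_ifs
    · exact Finset.measurable_sum _ fun k _ => (hX k a).mul (hX k b)
    · exact measurable_const
    · exact measurable_const
  · split_ifs
    · exact hy i
    · exact measurable_const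

lemma measurable_resid {n p : ℕ} {𝓩 : Type*} {m𝓩 : MeasurableSpace 𝓩} (T : Finset (Fin p))
    {X : 𝓩 → Fin n → Fin p → ℝ} {w : 𝓩 → Fin n → ℝ} (hX : ∀ k j, Measurable fun z => X z k j)
    (hw : ∀ k, Measurable fun z => w z k) (y : Fin p → ℝ) (τ : ℝ) (k : Fin n) :
    Measurable fun z => resid T (X z) (w z) y τ k := by
  have h1 : ∀ j, Measurable fun z => ∑ k, X z k j * w z k := fun j =>
    Finset.measurable_sum _ fun k _ => (hX k j).mul (hw k)
  have h2 := measurable_dualVec T hX h1 k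
  have h3 := measurable_dualVec T hX (y := fun _ => y) (fun j => measurable_const) k
  exact ((hw k).sub h2).add (h3.const_mul τ)

lemma dualVec_congr {n p : ℕ} {T : Finset (Fin p)} {X X' : Fin n → Fin p → ℝ}
    (h : ∀ k, ∀ j ∈ T, X k j = X' k j) {y y' : Fin p → ℝ} (hy : ∀ j ∈ T, y j = y' j) :
    dualVec T X y = dualVec T X' y' := by
  have h1 : gramPad T X = gramPad T X' := by
    ext i j
    simp only [gramPad, Matrix.of_apply]
    split_ifs with h1
    · exact Finset.sum_congr rfl fun k _ => by rw [h k i h1.1, h k j h1.2]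
    · rfl
    · rfl
  have h2 : (fun i => if i ∈ T then y i else 0) = fun i => if i ∈ T then y' i else 0 := by
    ext i
    split_ifs with hi
    · exact hy i hi
    · rfl
  ext k
  unfold dualVec coef
  rw [h1, h2]
  exact Finset.sum_congr rfl fun j hj => by rw [h k j hj]

lemma resid_congr {n p : ℕ} {T : Finset (Fin p)} {X X' : Fin n → Fin p → ℝ}
    (h : ∀ k, ∀ j ∈ T, X k j = X' k j) (w : Fin n → ℝ) (z : Fin p → ℝ) (τ : ℝ) :
    resid T X w z τ = resid T X' w z τ := by
  ext k
  unfold resid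
  rw [dualVec_congr h (y := z) (fun _ _ => rfl), dualVec_congr h (fun j hj => ?_)]
  exact Finset.sum_congr rfl fun k _ => by rw [h k j hj]

/-! ### The Gaussian design -/

/-- The coordinates of a vector with law `μ^ι` are i.i.d. with law `μ`. -/
lemma pi_law {ι Ω β : Type*} [Fintype ι] {mΩ : MeasurableSpace Ω} {mβ : MeasurableSpace β}
    {P : Measure Ω} [IsProbabilityMeasure P] {Y : Ω → ι → β} (hY : Measurable Y) {μ : Measure β}
    [IsProbabilityMeasure μ] (h : P.map Y = Measure.pi fun _ => μ) :
    (∀ i, P.map (fun ω => Y ω i) = μ) ∧ iIndepFun (fun i ω => Y ω i) P := by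
  have h1 : ∀ i, P.map (fun ω => Y ω i) = μ := by
    intro i
    have : (fun ω => Y ω i) = Function.eval i ∘ Y := rfl
    rw [this, ← Measure.map_map (measurable_pi_apply i) hY, h,
      (measurePreserving_eval (fun _ : ι => μ) i).map_eq]
  refine ⟨h1, ?_⟩
  rw [iIndepFun_iff_map_fun_eq_pi_map fun i => (measurable_pi_iff.1 hY i).aemeasurable]
  simp_rw [h1]
  exact h

instance {ι : Type*} [Fintype ι] : IsProbabilityMeasure (_root_.stdGaussian ι) := by
  unfold _root_.stdGaussian; infer_instance

lemma entries_law {n p : ℕ} {Ω : Type*} {mΩ : MeasurableSpace Ω} {P : Measure Ω}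
    [IsProbabilityMeasure P] {X : Ω → Fin n → Fin p → ℝ} (hX : Measurable X)
    (hXlaw : P.map X = Measure.pi fun _ => _root_.stdGaussian (Fin p)) :
    (∀ k j, P.map (fun ω => X ω k j) = gaussianReal 0 1) ∧
      iIndepFun (fun (q : Fin n × Fin p) ω => X ω q.1 q.2) P := by
  have h1 := pi_law hX hXlaw
  have h2 := fun k => pi_law (measurable_pi_iff.1 hX k) (h1.1 k)
  have hm : ∀ k j, Measurable fun ω => X ω k j := fun k j =>
    measurable_pi_iff.1 (measurable_pi_iff.1 hX k) j
  exact ⟨fun k j => (h2 k).1 j,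
    iIndepFun_uncurry' (X := fun k j ω => X ω k j) hm h1.2 fun k => (h2 k).2⟩

lemma column_law {n p : ℕ} {Ω : Type*} {mΩ : MeasurableSpace Ω} {P : Measure Ω}
    [IsProbabilityMeasure P] {X : Ω → Fin n → Fin p → ℝ} (hX : Measurable X)
    (hXlaw : P.map X = Measure.pi fun _ => _root_.stdGaussian (Fin p)) (j : Fin p) :
    P.map (fun ω k => X ω k j) = Measure.pi fun _ => gaussianReal 0 1 := by
  have h := entries_law hX hXlaw
  have hm : ∀ k j, Measurable fun ω => X ω k j := fun k j =>
    measurable_pi_iff.1 (measurable_pi_iff.1 hX k) j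
  have h2 : iIndepFun (fun k ω => X ω k j) P :=
    h.2.precomp (g := fun k : Fin n => (k, j)) fun a b hab => (Prod.mk.inj hab).1
  rw [iIndepFun_iff_map_fun_eq_pi_map fun k => (hm k j).aemeasurable] at h2
  rw [h2]
  simp_rw [h.1]

/-- The `j`-th column of `X` is independent of the remaining columns together with `W`; the remaining
columns are encoded as the matrix `X` with its `j`-th column set to zero. -/
lemma column_indep {n p : ℕ} {Ω : Type*} {mΩ : MeasurableSpace Ω} {P : Measure Ω}
    [IsProbabilityMeasure P] {X : Ω → Fin n → Fin p → ℝ} (hX : Measurable X)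
    (hXlaw : P.map X = Measure.pi fun _ => _root_.stdGaussian (Fin p))
    {W : Ω → Fin n → ℝ} (hW : Measurable W) (hXW : IndepFun X W P) (j : Fin p) :
    IndepFun (fun ω k => X ω k j)
      (fun ω => ((fun k i => if i = j then 0 else X ω k i : Fin n → Fin p → ℝ), W ω)) P := by
  have h := entries_law hX hXlaw
  have hm : ∀ k j, Measurable fun ω => X ω k j := fun k j =>
    measurable_pi_iff.1 (measurable_pi_iff.1 hX k) j
  set S : Finset (Fin n × Fin p) := Finset.univ.filter fun q => q.2 = j with hS
  set T : Finset (Fin n × Fin p) := Finset.univ.filter fun q => ¬ q.2 = j with hT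
  have hST : Disjoint S T := Finset.disjoint_filter_filter_not _ _ _
  have h1 := h.2.indepFun_finset S T hST fun q => hm q.1 q.2
  have h2 : IndepFun (fun ω k => X ω k j)
      (fun ω => (fun k i => if i = j then 0 else X ω k i : Fin n → Fin p → ℝ)) P := by
    have := h1.comp
      (φ := fun (u : S → ℝ) (k : Fin n) => u ⟨(k, j), by simp [hS]⟩)
      (ψ := fun (u : T → ℝ) (k : Fin n) (i : Fin p) =>
        if hi : i = j then 0 else u ⟨(k, i), by simp [hT, hi]⟩)
      (by fun_prop)
      (by
        refine measurable_pi_iff.2 fun k => measurable_pi_iff.2 fun i => ?_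
        split_ifs
        · exact measurable_const
        · fun_prop)
    convert this using 1
    · funext ω k
      simp
    · funext ω k i
      by_cases hi : i = j <;> simp [hi]
  set G : Ω → Fin n → ℝ := fun ω k => X ω k j with hG
  set Z : Ω → Fin n → Fin p → ℝ := fun ω k i => if i = j then 0 else X ω k i with hZ
  have hGm : Measurable G := measurable_pi_iff.2 fun k => hm k j
  have hζ : Measurable fun (x : Fin n → Fin p → ℝ) (k : Fin n) (i : Fin p) =>
      if i = j then 0 else x k i := by
    refine measurable_pi_iff.2 fun k => measurable_pi_iff.2 fun i => ?_
    split_ifs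
    · exact measurable_const
    · fun_prop
  have hZm : Measurable Z := hζ.comp hX
  have h3 : IndepFun (fun ω => (G ω, Z ω)) W P :=
    hXW.comp (φ := fun (x : Fin n → Fin p → ℝ) => ((fun k => x k j : Fin n → ℝ),
      (fun k i => if i = j then 0 else x k i : Fin n → Fin p → ℝ)))
      (ψ := id) (Measurable.prodMk (by fun_prop) hζ) measurable_id
  have h4 : IndepFun Z W P := h3.comp measurable_snd measurable_id
  have e2 := h2.map_prod_eq_prod_map_map hGm.aemeasurable hZm.aemeasurable
  have e3 := h3.map_prod_eq_prod_map_map (hGm.prodMk hZm).aemeasurable hW.aemeasurable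
  have e4 := h4.map_prod_eq_prod_map_map hZm.aemeasurable hW.aemeasurable
  rw [indepFun_iff_map_prod_eq_prod_map_map hGm.aemeasurable (hZm.prodMk hW).aemeasurable, e4]
  have : IsProbabilityMeasure (P.map G) := Measure.isProbabilityMeasure_map hGm.aemeasurable
  have : IsProbabilityMeasure (P.map Z) := Measure.isProbabilityMeasure_map hZm.aemeasurable
  have : IsProbabilityMeasure (P.map W) := Measure.isProbabilityMeasure_map hW.aemeasurable
  have e5 : (fun ω => (G ω, (Z ω, W ω)))
      = MeasurableEquiv.prodAssoc ∘ fun ω => ((G ω, Z ω), W ω) := rfl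
  rw [e5, ← Measure.map_map MeasurableEquiv.prodAssoc.measurable ((hGm.prodMk hZm).prodMk hW), e3,
    e2]
  exact Measure.prodAssoc_prod

/-- Tail of `⟨x_j, f(X, W)⟩` when `f` does not depend on the `j`-th column `x_j` of `X`. -/
lemma column_tail {n p : ℕ} {Ω : Type*} {mΩ : MeasurableSpace Ω} {P : Measure Ω}
    [IsProbabilityMeasure P] {X : Ω → Fin n → Fin p → ℝ} (hX : Measurable X)
    (hXlaw : P.map X = Measure.pi fun _ => _root_.stdGaussian (Fin p))
    {W : Ω → Fin n → ℝ} (hW : Measurable W) (hXW : IndepFun X W P) (j : Fin p)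
    {f : (Fin n → Fin p → ℝ) × (Fin n → ℝ) → Fin n → ℝ} (hf : ∀ k, Measurable fun z => f z k)
    (hfj : ∀ x w, f (fun k i => if i = j then 0 else x k i, w) = f (x, w))
    {t V : ℝ} (ht : 0 ≤ t) :
    P.real {ω | t ≤ |∑ k, X ω k j * f (X ω, W ω) k| ∧ ∑ k, f (X ω, W ω) k ^ 2 ≤ V} ≤
      2 * Real.exp (-t ^ 2 / (2 * V)) := by
  have hm : ∀ k j, Measurable fun ω => X ω k j := fun k j =>
    measurable_pi_iff.1 (measurable_pi_iff.1 hX k) j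
  have hζ : Measurable fun (ω : Ω) (k : Fin n) (i : Fin p) => if i = j then 0 else X ω k i := by
    refine measurable_pi_iff.2 fun k => measurable_pi_iff.2 fun i => ?_
    split_ifs
    · exact measurable_const
    · exact hm k i
  have := indep_linear_tail (measurable_pi_iff.2 fun k => hm k j) (hζ.prodMk hW)
    (column_indep hX hXlaw hW hXW j) (column_law hX hXlaw j) hf ht (V := V)
  simpa [hfj] using this

/-- For `Y ∼ N(0, q)` one has `E exp(-t Y²) = (1 + 2 t q)^{-1/2}`; here `t = 3 / (2q)`. -/
lemma gaussian_sq_mgf {q : ℝ} (hq : 0 < q) :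
    ∫ x, Real.exp (-(3 / (2 * q)) * x ^ 2) ∂(gaussianReal 0 q.toNNReal) = 1 / 2 := by
  have hne : q.toNNReal ≠ 0 := by simpa using hq
  rw [integral_gaussianReal_eq_integral_smul hne]
  simp only [gaussianPDFReal, sub_zero, smul_eq_mul, Real.coe_toNNReal _ hq.le]
  have : ∀ x : ℝ, (√(2 * Real.pi * q))⁻¹ * Real.exp (-x ^ 2 / (2 * q)) *
      Real.exp (-(3 / (2 * q)) * x ^ 2)
      = (√(2 * Real.pi * q))⁻¹ * Real.exp (-(2 / q) * x ^ 2) := by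
    intro x
    rw [mul_assoc, ← Real.exp_add]
    congr 2
    field_simp
    ring
  simp_rw [this]
  rw [integral_const_mul, integral_gaussian, ← Real.sqrt_inv,
    ← Real.sqrt_mul (by positivity)]
  have e : (2 * Real.pi * q)⁻¹ * (Real.pi / (2 / q)) = (1 / 2) ^ 2 := by
    have := Real.pi_pos
    field_simp
  rw [e, Real.sqrt_sq (by norm_num)]

/-- Lower tail of `‖X_S v‖²`, a chi-square variable with `n` degrees of freedom scaled by `‖v_S‖²`: Chernoff's
bound with `E exp(-θ ⟨row, v⟩²) = 1/2`. -/
lemma chi_square_lower {n p : ℕ} {Ω : Type*} {mΩ : MeasurableSpace Ω} {P : Measure Ω}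
    [IsProbabilityMeasure P] {X : Ω → Fin n → Fin p → ℝ} (hX : Measurable X)
    (hXlaw : P.map X = Measure.pi fun _ => _root_.stdGaussian (Fin p)) (S : Finset (Fin p))
    (v : Fin p → ℝ) :
    P.real {ω | ∑ k, (∑ j ∈ S, X ω k j * v j) ^ 2 < n / 4 * ∑ j ∈ S, v j ^ 2}
      ≤ Real.exp (-(n : ℝ) / 4) := by
  set q := ∑ j ∈ S, v j ^ 2 with hq
  have hq0 : 0 ≤ q := Finset.sum_nonneg fun _ _ => sq_nonneg _
  rcases hq0.eq_or_lt with h0 | hqpos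
  · have : {ω | ∑ k, (∑ j ∈ S, X ω k j * v j) ^ 2 < n / 4 * q} = ∅ := by
      ext ω
      simp only [← h0, mul_zero, Set.mem_ofPred_eq, Set.mem_empty_iff_false, iff_false, not_lt]
      exact Finset.sum_nonneg fun _ _ => sq_nonneg _
    rw [this]
    simp [Real.exp_nonneg]
  have hm : ∀ k j, Measurable fun ω => X ω k j := fun k j =>
    measurable_pi_iff.1 (measurable_pi_iff.1 hX k) j
  have h1 := pi_law hX hXlaw
  have h2 := fun k => pi_law (measurable_pi_iff.1 hX k) (h1.1 k)
  set Y : Fin n → Ω → ℝ := fun k ω => (∑ j ∈ S, v j * X ω k j) ^ 2 with hY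
  have hYm : ∀ k, Measurable (Y k) := fun k =>
    (Finset.measurable_sum _ fun j _ => (hm k j).const_mul _).pow_const 2
  have hYi : iIndepFun Y P :=
    h1.2.comp (fun _ (x : Fin p → ℝ) => (∑ j ∈ S, v j * x j) ^ 2) fun _ => by fun_prop
  set θ : ℝ := 3 / (2 * q) with hθ
  have hθ0 : 0 < θ := by positivity
  have hmgf : ∀ k, mgf (Y k) P (-θ) = 1 / 2 := by
    intro k
    have hl := map_sum_gaussian (h2 k).2 (fun j => hm k j) (h2 k).1 v S
    rw [mul_one, ← hq] at hl
    rw [← gaussian_sq_mgf hqpos, ← hl, integral_map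
      (Finset.measurable_sum _ fun j _ => (hm k j).const_mul _).aemeasurable
      (by fun_prop)]
    rfl
  have hsum : mgf (∑ k, Y k) P (-θ) = (1 / 2) ^ n := by
    rw [hYi.mgf_sum hYm]
    simp [hmgf]
  have hint : Integrable (fun ω => Real.exp (-θ * (∑ k, Y k) ω)) P := by
    refine Integrable.of_bound (C := 1) ?_ (Filter.Eventually.of_forall fun ω => ?_)
    · have : Measurable (∑ k, Y k) := by
        have e : (∑ k, Y k) = fun ω => ∑ k, Y k ω := by ext ω; simp
        rw [e]
        exact Finset.measurable_sum _ fun k _ => hYm k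
      exact (this.const_mul _).exp.aestronglyMeasurable
    · rw [Real.norm_eq_abs, abs_of_pos (Real.exp_pos _), Real.exp_le_one_iff]
      have : 0 ≤ (∑ k, Y k) ω := by
        rw [Finset.sum_apply]
        exact Finset.sum_nonneg fun _ _ => sq_nonneg _
      nlinarith
  have hch := measure_le_le_exp_mul_mgf (μ := P) (n / 4 * q) (by linarith : -θ ≤ 0) hint
  rw [hsum] at hch
  have hsub : {ω | ∑ k, (∑ j ∈ S, X ω k j * v j) ^ 2 < n / 4 * q}
      ⊆ {ω | (∑ k, Y k) ω ≤ n / 4 * q} := by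
    intro ω hω
    simp only [Set.mem_ofPred_eq, Finset.sum_apply, hY] at hω ⊢
    simp_rw [mul_comm (v _)]
    exact hω.le
  refine (measureReal_mono hsub).trans (hch.trans ?_)
  -- the exponent is `(3/8 - log 2) n ≤ -n/4`
  have e1 : - -θ * (n / 4 * q) = n * (3 / 8) := by
    rw [hθ]; field_simp; ring
  have e2 : ((1 : ℝ) / 2) ^ n = Real.exp (-(n * Real.log 2)) := by
    rw [one_div, inv_pow, Real.exp_neg, mul_comm, Real.exp_mul, Real.exp_log two_pos,
      Real.rpow_natCast]
  rw [e1, e2, ← Real.exp_add, Real.exp_le_exp]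
  have := Real.log_two_gt_d9
  have hn : (0 : ℝ) ≤ n := Nat.cast_nonneg n
  nlinarith

lemma gaussian_sq_moment {Ω : Type*} {mΩ : MeasurableSpace Ω} {P : Measure Ω}
    {Y : Ω → ℝ} (hY : Measurable Y) {v : NNReal} (h : P.map Y = gaussianReal 0 v) :
    Integrable (fun ω => Y ω ^ 2) P ∧ ∫ ω, Y ω ^ 2 ∂P = v := by
  have hL : MemLp id 2 (gaussianReal 0 v) := memLp_id_gaussianReal 2
  constructor
  · have := hL.integrable_sq
    rw [← h, integrable_map_measure (by fun_prop) hY.aemeasurable] at this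
    exact this
  · have h1 := variance_id_gaussianReal (μ := 0) (v := v)
    rw [variance_of_integral_eq_zero aemeasurable_id (by simp)] at h1
    rw [← h1, ← h, integral_map hY.aemeasurable (by fun_prop)]
    rfl

/-- Markov's inequality for a sum of squares of centred Gaussians, not necessarily independent. -/
lemma markov_sq {ι Ω : Type*} {mΩ : MeasurableSpace Ω} {P : Measure Ω}
    [IsProbabilityMeasure P] (T : Finset ι) {Y : ι → Ω → ℝ} (hY : ∀ i, Measurable (Y i))
    {v : NNReal} (h : ∀ i, P.map (Y i) = gaussianReal 0 v) {B : ℝ} (hB : 0 < B) :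
    P.real {ω | B ≤ ∑ i ∈ T, Y i ω ^ 2} ≤ T.card * v / B := by
  have h1 := mul_meas_ge_le_integral_of_nonneg (μ := P) (f := fun ω => ∑ i ∈ T, Y i ω ^ 2)
    (Filter.Eventually.of_forall fun ω => Finset.sum_nonneg fun _ _ => sq_nonneg _)
    (integrable_finsetSum _ fun i _ => (gaussian_sq_moment (hY i) (h i)).1) B
  rw [integral_finsetSum _ fun i _ => (gaussian_sq_moment (hY i) (h i)).1] at h1
  simp_rw [fun i => (gaussian_sq_moment (hY i) (h i)).2] at h1
  rw [le_div_iff₀ hB, mul_comm]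
  simpa using h1

/-! ### The least eigenvalue of the Gram matrix on the support -/

/-- The integer points of `[-8s², 8s²]^S`, extended by zero outside `S`. -/
noncomputable def intNet {p : ℕ} (S : Finset (Fin p)) : Finset (Fin p → ℤ) :=
  Fintype.piFinset fun i => if i ∈ S then
    Finset.Icc (-(8 * S.card ^ 2 : ℕ) : ℤ) ((8 * S.card ^ 2 : ℕ) : ℤ) else {0}

lemma card_intNet {p : ℕ} (S : Finset (Fin p)) :
    (intNet S).card = (16 * S.card ^ 2 + 1) ^ S.card := by
  have h : (((8 * S.card ^ 2 : ℕ) : ℤ) + 1 - (-(8 * S.card ^ 2 : ℕ) : ℤ)).toNat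
      = 16 * S.card ^ 2 + 1 := by omega
  unfold intNet
  rw [Fintype.card_piFinset]
  simp only [apply_ite Finset.card, Int.card_Icc, h, Finset.card_singleton]
  rw [Finset.prod_ite]
  simp

/-- A lower bound on integer points extends to all vectors. A vector scaled to norm `8 s²` is rounded to
an integer point with error at most `√s`, and the error is controlled by the Frobenius norm of `X_S`. -/
lemma eigLB_of_net {n p : ℕ} (X : Fin n → Fin p → ℝ) (S : Finset (Fin p)) (hS : 0 < S.card)
    (hF : ∑ j ∈ S, ∑ k, X k j ^ 2 ≤ n * (S.card : ℝ) ^ 2)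
    (hnet : ∀ m ∈ intNet S, (n : ℝ) / 4 * ∑ j ∈ S, (m j : ℝ) ^ 2 ≤
      ∑ k, (∑ j ∈ S, X k j * (m j : ℝ)) ^ 2) : EigLB S X ((n : ℝ) / 32) := by
  intro v
  set s : ℝ := (S.card : ℝ) with hs
  have hs1 : 1 ≤ s := by rw [hs]; exact_mod_cast hS
  have hn : (0 : ℝ) ≤ n := Nat.cast_nonneg n
  set q := ∑ j ∈ S, v j ^ 2 with hq
  have hq0 : 0 ≤ q := Finset.sum_nonneg fun _ _ => sq_nonneg _
  rcases hq0.eq_or_lt with h0 | hqpos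
  · rw [← h0, mul_zero]
    exact Finset.sum_nonneg fun _ _ => sq_nonneg _
  set N : ℝ := 8 * s ^ 2 with hN
  have hNpos : 0 < N := by positivity
  have hsq : 0 < √q := Real.sqrt_pos.2 hqpos
  set c : ℝ := N / √q with hc
  have hcpos : 0 < c := by positivity
  have hc2 : c ^ 2 * q = N ^ 2 := by
    rw [hc, div_pow, Real.sq_sqrt hq0]; field_simp
  set u : Fin p → ℝ := fun j => c * v j with hu
  have hu2 : ∑ j ∈ S, u j ^ 2 = N ^ 2 := by
    rw [← hc2, hq, Finset.mul_sum]
    simp [hu, mul_pow]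
  set m : Fin p → ℤ := fun j => if j ∈ S then ⌊u j⌋ else 0 with hm
  have hmS : ∀ j ∈ S, m j = ⌊u j⌋ := fun j hj => by simp [hm, hj]
  set d : Fin p → ℝ := fun j => u j - m j with hd
  have hdsq : ∑ j ∈ S, d j ^ 2 ≤ s := by
    have : ∀ j ∈ S, d j ^ 2 ≤ 1 := by
      intro j hj
      have h1 := Int.floor_le (u j)
      have h2 := Int.lt_floor_add_one (u j)
      simp only [hd, hmS j hj]
      nlinarith
    simpa [hs] using Finset.sum_le_sum this
  have hmem : m ∈ intNet S := by
    unfold intNet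
    rw [Fintype.mem_piFinset]
    intro j
    by_cases hj : j ∈ S
    · have h1 : u j ^ 2 ≤ N ^ 2 := by
        rw [← hu2]
        exact Finset.single_le_sum (f := fun j => u j ^ 2) (fun _ _ => sq_nonneg _) hj
      have h2 := abs_le.1 (abs_le_of_sq_le_sq h1 hNpos.le)
      have hcast : (((8 * S.card ^ 2 : ℕ) : ℤ) : ℝ) = N := by push_cast; rw [hN, hs]
      simp only [hj, if_true, Finset.mem_Icc, hmS j hj]
      constructor
      · rw [Int.le_floor]; push_cast at hcast ⊢; linarith [h2.1]
      · have : ((⌊u j⌋ : ℤ) : ℝ) ≤ ((8 * S.card ^ 2 : ℕ) : ℤ) := by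
          rw [hcast]; exact (Int.floor_le _).trans h2.2
        exact_mod_cast this
    · simp [hj, hm]
  have h1 := hnet m hmem
  -- `2‖m‖² + 2‖d‖² ≥ ‖u‖²`
  have h2 : N ^ 2 ≤ 2 * ∑ j ∈ S, (m j : ℝ) ^ 2 + 2 * ∑ j ∈ S, d j ^ 2 := by
    rw [← hu2, Finset.mul_sum, Finset.mul_sum, ← Finset.sum_add_distrib]
    refine Finset.sum_le_sum fun j _ => ?_
    have : u j = m j + d j := by simp [hd]
    rw [this]
    nlinarith [sq_nonneg ((m j : ℝ) - d j)]
  have h3 : ∑ k, (∑ j ∈ S, X k j * d j) ^ 2 ≤ n * s ^ 2 * s := by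
    calc ∑ k, (∑ j ∈ S, X k j * d j) ^ 2
        ≤ ∑ k, (∑ j ∈ S, X k j ^ 2) * ∑ j ∈ S, d j ^ 2 :=
          Finset.sum_le_sum fun k _ => Finset.sum_mul_sq_le_sq_mul_sq _ _ _
      _ = (∑ j ∈ S, ∑ k, X k j ^ 2) * ∑ j ∈ S, d j ^ 2 := by
          rw [← Finset.sum_mul, Finset.sum_comm]
      _ ≤ n * s ^ 2 * s := by
          refine mul_le_mul hF hdsq (Finset.sum_nonneg fun _ _ => sq_nonneg _) (by positivity)
  have h4 : ∑ k, (∑ j ∈ S, X k j * (m j : ℝ)) ^ 2 ≤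
      2 * ∑ k, (∑ j ∈ S, X k j * u j) ^ 2 + 2 * ∑ k, (∑ j ∈ S, X k j * d j) ^ 2 := by
    rw [Finset.mul_sum, Finset.mul_sum, ← Finset.sum_add_distrib]
    refine Finset.sum_le_sum fun k _ => ?_
    have : ∑ j ∈ S, X k j * (m j : ℝ) = ∑ j ∈ S, X k j * u j - ∑ j ∈ S, X k j * d j := by
      rw [← Finset.sum_sub_distrib]
      exact Finset.sum_congr rfl fun j _ => by simp only [hd]; ring
    rw [this]
    nlinarith [sq_nonneg (∑ j ∈ S, X k j * u j + ∑ j ∈ S, X k j * d j)]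
  have h5 : ∑ k, (∑ j ∈ S, X k j * u j) ^ 2 = c ^ 2 * ∑ k, (∑ j ∈ S, X k j * v j) ^ 2 := by
    rw [Finset.mul_sum]
    refine Finset.sum_congr rfl fun k _ => ?_
    rw [← mul_pow, Finset.mul_sum]
    congr 1
    exact Finset.sum_congr rfl fun j _ => by simp only [hu]; ring
  have h6 : (n : ℝ) / 32 * N ^ 2 ≤ c ^ 2 * ∑ k, (∑ j ∈ S, X k j * v j) ^ 2 := by
    rw [← h5]
    have e : N ^ 2 = 64 * s ^ 4 := by rw [hN]; ring
    have hm2 : N ^ 2 / 2 - s ≤ ∑ j ∈ S, (m j : ℝ) ^ 2 := by linarith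
    have h7 := (mul_le_mul_of_nonneg_left hm2 (by positivity : 0 ≤ (n : ℝ) / 4)).trans h1
    have h8 : s ^ 3 ≤ s ^ 4 := pow_le_pow_right₀ hs1 (by norm_num)
    have h9 : s ≤ s ^ 4 := by simpa using pow_le_pow_right₀ hs1 (by norm_num : 1 ≤ 4)
    rw [e] at h7 ⊢
    have h10 : 0 ≤ n * (2 * s ^ 4 - s ^ 3 - s / 8) := mul_nonneg hn (by linarith)
    nlinarith
  rw [← hc2, mul_left_comm] at h6
  exact le_of_mul_le_mul_left h6 (by positivity)

/-- Union bound over the net, together with Markov's inequality for the Frobenius norm of `X_S`. -/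
lemma prob_not_eigLB {n p : ℕ} {Ω : Type*} {mΩ : MeasurableSpace Ω} {P : Measure Ω}
    [IsProbabilityMeasure P] {X : Ω → Fin n → Fin p → ℝ} (hX : Measurable X)
    (hXlaw : P.map X = Measure.pi fun _ => _root_.stdGaussian (Fin p)) (hn : 0 < n)
    (S : Finset (Fin p)) (hS : 0 < S.card) :
    P.real {ω | ¬ EigLB S (X ω) ((n : ℝ) / 32)} ≤
      1 / S.card + (16 * (S.card : ℝ) ^ 2 + 1) ^ S.card * Real.exp (-(n : ℝ) / 4) := by
  have hm : ∀ k j, Measurable fun ω => X ω k j := fun k j =>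
    measurable_pi_iff.1 (measurable_pi_iff.1 hX k) j
  set A := {ω | n * (S.card : ℝ) ^ 2 ≤
    ∑ q ∈ (Finset.univ : Finset (Fin n)) ×ˢ S, X ω q.1 q.2 ^ 2} with hA
  set C : (Fin p → ℤ) → Set Ω := fun m =>
    {ω | ∑ k, (∑ j ∈ S, X ω k j * (m j : ℝ)) ^ 2 < n / 4 * ∑ j ∈ S, (m j : ℝ) ^ 2} with hC
  have hsub : {ω | ¬ EigLB S (X ω) ((n : ℝ) / 32)} ⊆ A ∪ ⋃ m ∈ intNet S, C m := by
    intro ω hω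
    by_contra hcon
    simp only [Set.mem_union, Set.mem_iUnion, not_or, not_exists, hA, hC, Set.mem_ofPred_eq,
      not_le, not_lt] at hcon
    refine hω (eigLB_of_net _ S hS ?_ fun m hm => hcon.2 m hm)
    rw [Finset.sum_comm, ← Finset.sum_product']
    exact hcon.1.le
  have hsR : (0 : ℝ) < S.card := by exact_mod_cast hS
  have hnR : (0 : ℝ) < n := by exact_mod_cast hn
  have hPA : P.real A ≤ 1 / S.card := by
    refine (markov_sq _ (Y := fun (q : Fin n × Fin p) ω => X ω q.1 q.2) (fun q => hm q.1 q.2)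
      (fun q => (entries_law hX hXlaw).1 q.1 q.2) (by positivity)).trans (le_of_eq ?_)
    simp only [Finset.card_product, Finset.card_univ, Fintype.card_fin, NNReal.coe_one]
    push_cast
    field_simp
  have hPC : P.real (⋃ m ∈ intNet S, C m) ≤
      (16 * (S.card : ℝ) ^ 2 + 1) ^ S.card * Real.exp (-(n : ℝ) / 4) := by
    refine (measureReal_biUnion_finset_le _ _).trans ?_
    refine (Finset.sum_le_sum fun m _ =>
      chi_square_lower hX hXlaw S fun j => (m j : ℝ)).trans (le_of_eq ?_)
    rw [Finset.sum_const, card_intNet, nsmul_eq_mul]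
    push_cast
    rfl
  exact (measureReal_mono hsub).trans ((measureReal_union_le _ _).trans (add_le_add hPA hPC))

/-! ### Nonasymptotic bound on the failure probability -/

/-- Bound on the probability that sign recovery fails. Its terms account for: the least eigenvalue on the
support, the event `‖W‖² ≥ B`, the leave-one-out terms, the noise terms, and dual feasibility off the
support. -/
noncomputable def failBound (n p s : ℕ) (σ2 lam ρ B : ℝ) : ℝ :=
  (1 / s + (16 * (s : ℝ) ^ 2 + 1) ^ s * Real.exp (-(n : ℝ) / 4)) + n * σ2 / B
    + s * (2 * Real.exp (-1 ^ 2 / (2 * (32 * s / n))))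
    + s * (2 * Real.exp (-(ρ / 2) ^ 2 / (2 * (32 / n * σ2))))
    + p * (2 * Real.exp (-(n * lam) ^ 2 / (2 * (B + (n * lam) ^ 2 * (32 * s / n)))))

/-- Off the bad events `E`, `D`, `A2`, `A3`, `A4`, all hypotheses of `propR_of_witness` hold. The event
`PropR` is not shown to be measurable; only subadditivity of the outer measure is used. -/
lemma prob_propR_ge {n p : ℕ} {Ω : Type*} {mΩ : MeasurableSpace Ω} {P : Measure Ω}
    [IsProbabilityMeasure P] {X : Ω → Fin n → Fin p → ℝ} (hX : Measurable X)
    (hXlaw : P.map X = Measure.pi fun _ => _root_.stdGaussian (Fin p))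
    {W : Ω → Fin n → ℝ} (hW : Measurable W) {σ2 : ℝ} (hσ2 : 0 < σ2)
    (hWlaw : P.map W = Measure.pi fun _ => gaussianReal 0 σ2.toNNReal)
    (hXW : IndepFun X W P) (hn : 0 < n) (βs : Fin p → ℝ) (S : Finset (Fin p))
    (hS : ∀ i, i ∈ S ↔ βs i ≠ 0) (hs : 0 < S.card) {lam ρ B : ℝ} (hlam : 0 < lam)
    (hρ0 : 0 < ρ) (hρ : ∀ i ∈ S, ρ ≤ |βs i|) (hlρ : 64 * lam < ρ / 2) (hB : 0 < B) :
    1 - failBound n p S.card σ2 lam ρ B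
      ≤ P.real {ω | PropR (Matrix.of (X ω)) βs (W ω) lam} := by
  have hnR : (0 : ℝ) < n := by exact_mod_cast hn
  have hsR : (0 : ℝ) < S.card := by exact_mod_cast hs
  set κ : ℝ := (n : ℝ) / 32 with hκdef
  have hκ : 0 < κ := by positivity
  set z : Fin p → ℝ := fun j => sgn (βs j) with hz
  have hz2 : ∀ T ⊆ S, (∑ j ∈ T, z j ^ 2) / κ ≤ 32 * S.card / n := by
    intro T hT
    have h1 : ∑ j ∈ T, z j ^ 2 ≤ T.card := by
      have : ∀ j ∈ T, z j ^ 2 ≤ 1 := fun j _ => (sq_le_one_iff_abs_le_one _).2 (abs_sgn_le _)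
      simpa using Finset.sum_le_sum this
    have h2 : (T.card : ℝ) ≤ S.card := by exact_mod_cast Finset.card_le_card hT
    rw [hκdef, div_div_eq_mul_div]
    exact div_le_div_of_nonneg_right (by linarith) hnR.le
  have hmX : ∀ k j, Measurable fun q : (Fin n → Fin p → ℝ) × (Fin n → ℝ) => q.1 k j :=
    fun k j => by fun_prop
  set E : Set Ω := {ω | ¬ EigLB S (X ω) κ} with hE
  set D : Set Ω := {ω | B ≤ ∑ k, W ω k ^ 2} with hD
  set A2 : Fin p → Set Ω := fun i => {ω | 1 ≤ |∑ k, X ω k i * dualVec (S.erase i) (X ω) z k| ∧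
    ∑ k, dualVec (S.erase i) (X ω) z k ^ 2 ≤ 32 * S.card / n} with hA2
  set A3 : Fin p → Set Ω := fun i =>
    {ω | ρ / 2 ≤ |∑ k, W ω k * dualVec S (X ω) (Pi.single i 1) k| ∧
    ∑ k, dualVec S (X ω) (Pi.single i 1) k ^ 2 ≤ 32 / n} with hA3
  set A4 : Fin p → Set Ω := fun j =>
    {ω | n * lam ≤ |∑ k, X ω k j * resid S (X ω) (W ω) z (n * lam) k| ∧
    ∑ k, resid S (X ω) (W ω) z (n * lam) k ^ 2 ≤ B + (n * lam) ^ 2 * (32 * S.card / n)} with hA4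
  set R : Set Ω := {ω | PropR (Matrix.of (X ω)) βs (W ω) lam} with hR
  have hcover : (Set.univ : Set Ω) ⊆
      R ∪ ((((E ∪ D) ∪ ⋃ i ∈ S, A2 i) ∪ ⋃ i ∈ S, A3 i) ∪ ⋃ j ∈ Sᶜ, A4 j) := by
    intro ω _
    by_contra hcon
    simp only [Set.mem_union, Set.mem_iUnion, not_or, not_exists] at hcon
    obtain ⟨hnR', ⟨⟨⟨⟨hEω, hDω⟩, h2⟩, h3⟩, h4⟩⟩ := hcon
    have hEω' : EigLB S (X ω) κ := not_not.1 hEω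
    have hDω' : ∑ k, W ω k ^ 2 < B := not_le.1 hDω
    refine hnR' (propR_of_witness hn (X ω) βs (W ω) hlam S hS hκ hEω' ?_ ?_ ?_ hρ ?_)
    · intro i hi
      by_contra hlt
      refine h2 i hi ⟨(not_le.1 hlt).le, ?_⟩
      exact (dualVec_norm hκ (hEω'.mono (Finset.erase_subset i S)) z).trans
        (hz2 _ (Finset.erase_subset i S))
    · intro i hi
      by_contra hlt
      refine h3 i hi ⟨(not_le.1 hlt).le, ?_⟩
      refine (dualVec_norm hκ hEω' _).trans (le_of_eq ?_)
      have : ∑ j ∈ S, (Pi.single i (1 : ℝ) : Fin p → ℝ) j ^ 2 = 1 := by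
        rw [Finset.sum_eq_single_of_mem i hi fun j _ hj => by simp [hj]]
        simp
      rw [this, hκdef, div_div_eq_mul_div, one_mul]
    · intro j hj
      by_contra hlt
      refine h4 j (Finset.mem_compl.2 hj) ⟨(not_le.1 hlt).le, ?_⟩
      exact (resid_norm hκ hEω' (W ω) z (n * lam)).trans
        (add_le_add hDω'.le (mul_le_mul_of_nonneg_left (hz2 S subset_rfl) (sq_nonneg _)))
    · have : n * lam * (2 / κ) = 64 * lam := by
        rw [hκdef]; field_simp; norm_num
      rw [this]
      exact hlρ
  have hPD : P.real D ≤ n * σ2 / B := by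
    refine (markov_sq Finset.univ (Y := fun k ω => W ω k) (measurable_pi_iff.1 hW)
      (pi_law hW hWlaw).1 hB).trans (le_of_eq ?_)
    simp [Real.coe_toNNReal _ hσ2.le]
  have hP2 : ∀ i ∈ S, P.real (A2 i) ≤ 2 * Real.exp (-1 ^ 2 / (2 * (32 * S.card / n))) := by
    intro i _
    have hloo : ∀ (x : Fin n → Fin p → ℝ),
        dualVec (S.erase i) (fun k l => if l = i then 0 else x k l) z
          = dualVec (S.erase i) x z := fun x =>
      dualVec_congr (fun k j hj => if_neg (Finset.ne_of_mem_erase hj)) fun _ _ => rfl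
    have hmf : ∀ k, Measurable fun q : (Fin n → Fin p → ℝ) × (Fin n → ℝ) =>
        dualVec (S.erase i) q.1 z k := fun k =>
      measurable_dualVec (S.erase i) (X := fun q : (Fin n → Fin p → ℝ) × (Fin n → ℝ) => q.1)
        (y := fun _ => z) hmX (fun _ => measurable_const) k
    exact column_tail hX hXlaw hW hXW i (f := fun q => dualVec (S.erase i) q.1 z) hmf
      (fun x _ => hloo x) (t := 1) (V := 32 * S.card / n) zero_le_one
  have hP3 : ∀ i ∈ S, P.real (A3 i) ≤
      2 * Real.exp (-(ρ / 2) ^ 2 / (2 * (32 / n * σ2))) := by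
    intro i _
    have := indep_linear_tail hW hX hXW.symm hWlaw
      (f := fun x : Fin n → Fin p → ℝ => dualVec S x (Pi.single i 1))
      (fun k => measurable_dualVec S (X := fun x : Fin n → Fin p → ℝ => x)
        (y := fun _ => Pi.single i 1) (fun k j => by fun_prop) (fun _ => measurable_const) k)
      (t := ρ / 2) (V := 32 / n) (by positivity)
    rwa [Real.coe_toNNReal _ hσ2.le] at this
  have hP4 : ∀ j ∈ Sᶜ, P.real (A4 j) ≤
      2 * Real.exp (-(n * lam) ^ 2 / (2 * (B + (n * lam) ^ 2 * (32 * S.card / n)))) := by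
    intro j hj
    have hloo : ∀ (x : Fin n → Fin p → ℝ) (w : Fin n → ℝ),
        resid S (fun k l => if l = j then 0 else x k l) w z (n * lam)
          = resid S x w z (n * lam) := fun x w =>
      resid_congr (fun k i hi => if_neg (ne_of_mem_of_not_mem hi (Finset.mem_compl.1 hj))) _ _ _
    have hmf : ∀ k, Measurable fun q : (Fin n → Fin p → ℝ) × (Fin n → ℝ) =>
        resid S q.1 q.2 z (n * lam) k := fun k =>
      measurable_resid S (X := fun q : (Fin n → Fin p → ℝ) × (Fin n → ℝ) => q.1)
        (w := fun q => q.2) hmX (fun k => by fun_prop) z (n * lam) k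
    exact column_tail hX hXlaw hW hXW j (f := fun q => resid S q.1 q.2 z (n * lam)) hmf hloo
      (t := n * lam) (V := B + (n * lam) ^ 2 * (32 * S.card / n)) (by positivity)
  have hb : ∀ (T : Finset (Fin p)) (A : Fin p → Set Ω) (c : ℝ), (∀ i ∈ T, P.real (A i) ≤ c) →
      P.real (⋃ i ∈ T, A i) ≤ T.card * c := fun T A c h =>
    (measureReal_biUnion_finset_le _ _).trans
      ((Finset.sum_le_sum h).trans (by rw [Finset.sum_const, nsmul_eq_mul]))
  have hc4 : P.real (⋃ j ∈ Sᶜ, A4 j) ≤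
      p * (2 * Real.exp (-(n * lam) ^ 2 / (2 * (B + (n * lam) ^ 2 * (32 * S.card / n))))) := by
    refine (hb _ _ _ hP4).trans (mul_le_mul_of_nonneg_right ?_ (by positivity))
    have := Finset.card_le_univ Sᶜ
    rw [Fintype.card_fin] at this
    exact_mod_cast this
  have h1 : 1 ≤ P.real R + failBound n p S.card σ2 lam ρ B := by
    calc (1 : ℝ) = P.real Set.univ := by simp
      _ ≤ _ := measureReal_mono hcover
      _ ≤ _ := measureReal_union_le _ _
      _ ≤ _ := by
        refine add_le_add le_rfl ?_
        unfold failBound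
        refine (measureReal_union_le _ _).trans (add_le_add ?_ hc4)
        refine (measureReal_union_le _ _).trans (add_le_add ?_ (hb _ _ _ hP3))
        refine (measureReal_union_le _ _).trans (add_le_add ?_ (hb _ _ _ hP2))
        exact (measureReal_union_le _ _).trans
          (add_le_add (prob_not_eigLB hX hXlaw hn S hs) hPD)
  linarith

/-! ### Asymptotics -/

/-- The failure bound in the regime of the theorem, with `B = (n λ)² / (8 log p)`. This `B` makes the last
exponent at least `2 log p`, while `n σ² / B` is still of order `log p / (n λ²)`. -/
lemma failBound_le {n p s : ℕ} {σ2 lam ρ : ℝ} (hn : 0 < n) (hs : 0 < s) (hsp : s ≤ p)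
    (hp : 4 ≤ p) (hσ2 : 0 < σ2) (hlam : 0 < lam)
    (hsL : (s : ℝ) * Real.log p ≤ n / 256)
    (hρ : 512 * σ2 * Real.log s ≤ n * ρ ^ 2)
    (hps : Real.log p ≤ 2 * Real.log ((p : ℝ) - s)) :
    failBound n p s σ2 lam ρ ((n * lam) ^ 2 / (8 * Real.log p)) ≤
      (1 / s + Real.exp (-(1 / 8 * (n : ℝ)))) +
        16 * σ2 * (n * lam ^ 2 / Real.log ((p : ℝ) - s))⁻¹ + 2 / s + 2 / s + 2 / p := by
  have hnR : (0 : ℝ) < n := by exact_mod_cast hn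
  have hsR : (0 : ℝ) < s := by exact_mod_cast hs
  have hspR : (s : ℝ) ≤ p := by exact_mod_cast hsp
  have hpR : (4 : ℝ) ≤ p := by exact_mod_cast hp
  have hs1 : (1 : ℝ) ≤ s := by exact_mod_cast hs
  set L := Real.log p with hL
  have hLpos : 0 < L := Real.log_pos (by linarith)
  have hls : Real.log s ≤ L := Real.log_le_log hsR hspR
  -- a term `x · 2 exp(-e)` with `e ≥ 2 log x` is at most `2 / x`
  have key : ∀ x e : ℝ, 0 < x → 2 * Real.log x ≤ e → x * (2 * Real.exp (-e)) ≤ 2 / x := by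
    intro x e hx he
    have h1 : Real.exp (-e) ≤ (x ^ 2)⁻¹ := by
      rw [← Real.exp_log (pow_pos hx 2), ← Real.exp_neg, Real.exp_le_exp, Real.log_pow]
      push_cast; linarith
    calc x * (2 * Real.exp (-e)) ≤ x * (2 * (x ^ 2)⁻¹) := by gcongr
      _ = 2 / x := by field_simp
  unfold failBound
  refine add_le_add (add_le_add (add_le_add (add_le_add (add_le_add le_rfl ?_) ?_) ?_) ?_) ?_
  · have h17 : (16 * (s : ℝ) ^ 2 + 1) ≤ (p : ℝ) ^ 7 := by
      have h1 : (s : ℝ) ^ 2 ≤ p ^ 2 := by gcongr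
      have h2 : (4 : ℝ) ^ 5 ≤ p ^ 5 := by gcongr
      have h3 : (4 : ℝ) ^ 2 ≤ p ^ 2 := by gcongr
      nlinarith [mul_le_mul_of_nonneg_right h2 (sq_nonneg (p : ℝ))]
    have h2 : (16 * (s : ℝ) ^ 2 + 1) ^ s ≤ Real.exp (7 * (s * L)) := by
      calc (16 * (s : ℝ) ^ 2 + 1) ^ s ≤ ((p : ℝ) ^ 7) ^ s := by gcongr
        _ = Real.exp (7 * (s * L)) := by
          rw [← pow_mul, ← Real.exp_log (by positivity : (0 : ℝ) < p ^ (7 * s)), Real.log_pow]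
          rw [← hL]; push_cast; ring_nf
    refine (mul_le_mul_of_nonneg_right h2 (Real.exp_nonneg _)).trans ?_
    rw [← Real.exp_add, Real.exp_le_exp]
    linarith
  · have hD : 0 < Real.log ((p : ℝ) - s) := by linarith
    have e1 : n * σ2 / ((n * lam) ^ 2 / (8 * L)) = 8 * σ2 / (n * lam ^ 2) * L := by
      field_simp
    have e2 : 16 * σ2 * (n * lam ^ 2 / Real.log ((p : ℝ) - s))⁻¹
        = 8 * σ2 / (n * lam ^ 2) * (2 * Real.log ((p : ℝ) - s)) := by
      field_simp; norm_num
    rw [e1, e2]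
    gcongr
  · have e : -1 ^ 2 / (2 * (32 * (s : ℝ) / n)) = -(n / (64 * s)) := by
      field_simp; norm_num
    rw [e]
    refine key s _ hsR ?_
    rw [le_div_iff₀ (by positivity)]
    nlinarith [mul_le_mul_of_nonneg_left hls hsR.le]
  · have e : -(ρ / 2) ^ 2 / (2 * (32 / n * σ2)) = -(n * ρ ^ 2 / (256 * σ2)) := by
      field_simp; ring
    rw [e]
    refine key s _ hsR ?_
    rw [le_div_iff₀ (by positivity)]
    linarith
  · have e : -(n * lam) ^ 2 / (2 * ((n * lam) ^ 2 / (8 * L) + (n * lam) ^ 2 * (32 * s / n)))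
        = -(1 / (2 * (1 / (8 * L) + 32 * s / n))) := by
      field_simp
    rw [e]
    refine key p _ (by linarith) ?_
    rw [le_div_iff₀ (by positivity)]
    have : 2 * L * (2 * (1 / (8 * L) + 32 * s / n)) = 1 / 2 + 128 * (s * L / n) := by
      field_simp; ring
    rw [← hL, this]
    have h3 : (s : ℝ) * L / n ≤ 1 / 256 := by
      rw [div_le_iff₀ hnR]; linarith
    linarith

/-- The minimum of `|β|` over the nonempty finite support, so the infimum is attained. -/
lemma min_signal {p : ℕ} (S : Finset (Fin p)) (hS : 0 < S.card) (β : Fin p → ℝ)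
    (hβ : ∀ i ∈ S, β i ≠ 0) :
    0 < (⨅ i : {i : Fin p // i ∈ S}, |β i.1|) ∧
      ∀ i ∈ S, (⨅ i : {i : Fin p // i ∈ S}, |β i.1|) ≤ |β i| := by
  obtain ⟨i₀, hi₀⟩ := Finset.card_pos.1 hS
  have : Nonempty {i : Fin p // i ∈ S} := ⟨⟨i₀, hi₀⟩⟩
  constructor
  · obtain ⟨i, hi⟩ := exists_eq_ciInf_of_finite (f := fun i : {i : Fin p // i ∈ S} => |β i.1|)
    rw [← hi]
    exact abs_pos.2 (hβ _ i.2)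
  · intro i hi
    exact ciInf_le (f := fun i : {i : Fin p // i ∈ S} => |β i.1|)
      (Set.finite_range _).bddBelow ⟨i, hi⟩


/-- Corollary 1(b): in the uniform Gaussian ensemble with `n = γ p` and sublinear sparsity
`s log p / p → 0`, the Lasso succeeds with probability converging to one. -/
theorem lasso_uniform_sublinear_achievability
    (p s : ℕ → ℕ)
    (γ : ℝ) (hγ0 : 0 < γ) (hγ1 : γ < 1)
    (hγ : Tendsto (fun n : ℕ => (n : ℝ) / p n) atTop (nhds γ))
    (hs_inf : Tendsto s atTop atTop)
    (hsub : Tendsto (fun n => (s n : ℝ) * Real.log (p n) / p n) atTop (nhds 0))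
    (βstar : ∀ n : ℕ, Fin (p n) → ℝ)
    (S : ∀ n : ℕ, Finset (Fin (p n)))
    (hSsupp : ∀ n i, i ∈ S n ↔ βstar n i ≠ 0)
    (hScard : ∀ n, (S n).card = s n)
    (Ω : ℕ → Type) (mΩ : ∀ n, MeasurableSpace (Ω n))
    (P : ∀ n, Measure (Ω n)) (hP : ∀ n, IsProbabilityMeasure (P n))
    (X : ∀ n : ℕ, Ω n → Fin n → Fin (p n) → ℝ) (hXmeas : ∀ n, Measurable (X n))
    (hXlaw : ∀ n, Measure.map (X n) (P n) =
      Measure.pi (fun _ : Fin n => stdGaussian (Fin (p n))))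
    (σ2 : ℝ) (hσ2 : 0 < σ2)
    (W : ∀ n : ℕ, Ω n → Fin n → ℝ) (hWmeas : ∀ n, Measurable (W n))
    (hWlaw : ∀ n,
      Measure.map (W n) (P n) = Measure.pi (fun _ : Fin n => gaussianReal 0 σ2.toNNReal))
    (hindep : ∀ n, IndepFun (X n) (W n) (P n))
    (lam : ℕ → ℝ) (hlam : ∀ n, 0 < lam n)
    (hlam0 : Tendsto lam atTop (nhds 0))
    (hlam1 : Tendsto (fun n => n * lam n ^ 2 / Real.log ((p n : ℝ) - s n)) atTop atTop)
    (hlam2 : Tendsto (fun n =>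
        (1 / ⨅ i : {i : Fin (p n) // i ∈ S n}, |βstar n i.1|) *
          (lam n + Real.sqrt (Real.log (s n) / n)))
      atTop (nhds 0)) :
    Tendsto (fun n => P n {ω | PropR (Matrix.of (X n ω)) (βstar n) (W n ω) (lam n)})
      atTop (nhds 1) := by
  have hnt : Tendsto (fun n : ℕ => (n : ℝ)) atTop atTop := tendsto_natCast_atTop_atTop
  have hsp : ∀ n, s n ≤ p n := fun n => by
    rw [← hScard n]; simpa using Finset.card_le_univ (S n)
  have hnp : ∀ᶠ n : ℕ in atTop, (n : ℝ) < p n := by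
    filter_upwards [hγ.eventually_lt_const hγ1, hγ.eventually_const_lt hγ0] with n h1 h2
    have hp : (0 : ℝ) < p n := by
      rcases (Nat.cast_nonneg (α := ℝ) (p n)).eq_or_lt with h | h
      · rw [← h, div_zero] at h2; exact absurd h2 (lt_irrefl 0)
      · exact h
    rwa [div_lt_one hp] at h1
  have hpR : Tendsto (fun n => (p n : ℝ)) atTop atTop :=
    tendsto_atTop_mono' _ (hnp.mono fun n h => h.le) hnt
  have hsR : Tendsto (fun n => (s n : ℝ)) atTop atTop := tendsto_natCast_atTop_atTop.comp hs_inf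
  have hsL : Tendsto (fun n => (s n : ℝ) * Real.log (p n) / n) atTop (nhds 0) := by
    have h := hsub.div hγ hγ0.ne'
    rw [zero_div] at h
    refine h.congr' ?_
    filter_upwards [hpR.eventually_gt_atTop 0] with n hp
    simp only [Pi.div_apply]
    rw [div_div_div_cancel_right₀ hp.ne']
  set ρ : ℕ → ℝ := fun n => ⨅ i : {i : Fin (p n) // i ∈ S n}, |βstar n i.1| with hρdef
  set ε : ℝ := min (1 / 256) (1 / √(512 * σ2)) with hε
  have hε0 : 0 < ε := by positivity
  have hmain : ∀ᶠ n in atTop,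
      1 - ((1 / (s n : ℝ) + Real.exp (-(1 / 8 * (n : ℝ)))) +
        16 * σ2 * (n * lam n ^ 2 / Real.log ((p n : ℝ) - s n))⁻¹ + 2 / s n + 2 / s n + 2 / p n)
      ≤ (P n).real {ω | PropR (Matrix.of (X n ω)) (βstar n) (W n ω) (lam n)} := by
    filter_upwards [hnp, hpR.eventually_ge_atTop 4, hs_inf.eventually_ge_atTop 1,
      eventually_gt_atTop 0, hsL.eventually_lt_const (by norm_num : (0 : ℝ) < 1 / 256),
      hlam2.eventually_lt_const hε0] with n h1 h2 h3 h4 h5 h6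
    have hnR : (0 : ℝ) < n := by exact_mod_cast h4
    have hs1 : (1 : ℝ) ≤ s n := by exact_mod_cast h3
    have hspos : 0 < (S n).card := by rw [hScard]; exact h3
    have hlog1 : 1 ≤ Real.log (p n) := by
      rw [Real.le_log_iff_exp_le (by linarith)]
      linarith [Real.exp_one_lt_d9]
    have hsL' : (s n : ℝ) * Real.log (p n) ≤ n / 256 := by
      rw [div_lt_iff₀ hnR] at h5; linarith
    have hρn := min_signal (S n) hspos (βstar n) fun i hi => (hSsupp n i).1 hi
    change 0 < ρ n ∧ _ at hρn
    have h7 : lam n + √(Real.log (s n) / n) < ε * ρ n := by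
      rw [one_div_mul_eq_div, div_lt_iff₀ hρn.1] at h6
      exact h6
    have hlamn := hlam n
    have hsqrt := Real.sqrt_nonneg (Real.log (s n) / n)
    have hlρ : 64 * lam n < ρ n / 2 := by
      have : ε * ρ n ≤ 1 / 256 * ρ n :=
        mul_le_mul_of_nonneg_right (min_le_left _ _) hρn.1.le
      linarith
    have hρσ : 512 * σ2 * Real.log (s n) ≤ n * ρ n ^ 2 := by
      have h8 : √(Real.log (s n) / n) ≤ 1 / √(512 * σ2) * ρ n := by
        have : ε * ρ n ≤ 1 / √(512 * σ2) * ρ n :=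
          mul_le_mul_of_nonneg_right (min_le_right _ _) hρn.1.le
        linarith
      have h9 := pow_le_pow_left₀ hsqrt h8 2
      rw [Real.sq_sqrt (div_nonneg (Real.log_nonneg hs1) hnR.le), mul_pow, div_pow,
        Real.sq_sqrt (by positivity), div_le_iff₀ hnR] at h9
      calc 512 * σ2 * Real.log (s n)
          ≤ 512 * σ2 * (1 ^ 2 / (512 * σ2) * ρ n ^ 2 * n) := by gcongr
        _ = n * ρ n ^ 2 := by field_simp
    -- `s ≤ p / 2`, hence `p ≤ (p - s) ^ 2`
    have hps : Real.log (p n) ≤ 2 * Real.log ((p n : ℝ) - s n) := by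
      have h8 : (s n : ℝ) ≤ p n / 2 := by nlinarith
      have h9 : (p n : ℝ) ≤ ((p n : ℝ) - s n) ^ 2 := by nlinarith
      calc Real.log (p n) ≤ Real.log (((p n : ℝ) - s n) ^ 2) :=
            Real.log_le_log (by linarith) h9
        _ = 2 * Real.log ((p n : ℝ) - s n) := by rw [Real.log_pow]; norm_num
    have h2' : 4 ≤ p n := by exact_mod_cast h2
    have hB : 0 < (n * lam n) ^ 2 / (8 * Real.log (p n)) := by positivity
    have hfb := failBound_le h4 h3 (hsp n) h2' hσ2 hlamn hsL' hρσ hps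
    have := prob_propR_ge (hXmeas n) (hXlaw n) (hWmeas n) hσ2 (hWlaw n) (hindep n) h4 (βstar n)
      (S n) (hSsupp n) hspos hlamn hρn.1 hρn.2 hlρ hB
    rw [hScard] at this
    linarith
  have hlim : Tendsto (fun n : ℕ =>
      1 - ((1 / (s n : ℝ) + Real.exp (-(1 / 8 * (n : ℝ)))) +
        16 * σ2 * (n * lam n ^ 2 / Real.log ((p n : ℝ) - s n))⁻¹ + 2 / s n + 2 / s n + 2 / p n))
      atTop (nhds 1) := by
    have l1 : Tendsto (fun n : ℕ => Real.exp (-(1 / 8 * (n : ℝ)))) atTop (nhds 0) :=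
      Real.tendsto_exp_neg_atTop_nhds_zero.comp (hnt.const_mul_atTop (by norm_num))
    have l2 := (hlam1.inv_tendsto_atTop).const_mul (16 * σ2)
    have l3 := fun c : ℝ => hsR.const_div_atTop c
    have l4 := hpR.const_div_atTop 2
    have := (((((((l3 1).add l1).add l2).add (l3 2)).add (l3 2)).add l4).const_sub 1)
    simpa using this
  have hreal : Tendsto (fun n =>
      (P n).real {ω | PropR (Matrix.of (X n ω)) (βstar n) (W n ω) (lam n)}) atTop (nhds 1) :=
    tendsto_of_tendsto_of_tendsto_of_le_of_le' hlim tendsto_const_nhds hmain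
      (Eventually.of_forall fun n => measureReal_le_one)
  rw [← ENNReal.tendsto_toReal_iff (fun n => measure_ne_top _ _) ENNReal.one_ne_top,
    ENNReal.toReal_one]
  exact hreal
end
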